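/- Let φ₁, φ₂ be GF²-sentences and Σ a signature. Then φ₁ ⊨_Σ φ₂ if and only if for every regular forest model 𝔄 of φ₁ of finite outdegree there is a forest model 𝔅 of φ₂ such that: (1) for every a ∈ A there is b ∈ B with (𝔄,a) ∼_Σ (𝔅,b); and (2) for every b ∈ B and every k ≥ 0 there is a ∈ A with (𝔄,a) ∼^k_Σ (𝔅,b). (Forest-model variant of the bounded-bisimulation characterization of GF²(Σ)-entailment.) -/

import Mathlib

/-! Core: relational two-variable first-order logic with equality (unary and
binary predicates only), the guarded fragment GF², structures, satisfaction,
atomic types, (bounded/delimited) guarded bisimulations, forest structures. -/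

namespace GFC

inductive Var : Type
  | x
  | y
deriving DecidableEq

/-- Formulas of two-variable relational FO with equality (variables `x`, `y`). -/
inductive Fml (U B : Type) : Type
  | uatom : U → Var → Fml U B
  | batom : B → Var → Var → Fml U B
  | eqv   : Var → Var → Fml U B
  | fls   : Fml U B
  | neg   : Fml U B → Fml U B
  | conj  : Fml U B → Fml U B → Fml U B
  | disj  : Fml U B → Fml U B → Fml U B
  | impl  : Fml U B → Fml U B → Fml U B
  | all   : Var → Fml U B → Fml U B
  | ex    : Var → Fml U B → Fml U B

namespace Fml

variable {U B : Type}

def free : Fml U B → Set Var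
  | uatom _ v => {v}
  | batom _ v w => {v, w}
  | eqv v w => {v, w}
  | fls => ∅
  | neg φ => φ.free
  | conj φ ψ => φ.free ∪ ψ.free
  | disj φ ψ => φ.free ∪ ψ.free
  | impl φ ψ => φ.free ∪ ψ.free
  | all v φ => φ.free \ {v}
  | ex v φ => φ.free \ {v}

def IsSentence (φ : Fml U B) : Prop := φ.free = ∅

def upreds : Fml U B → Set U
  | uatom P _ => {P}
  | batom _ _ _ => ∅
  | eqv _ _ => ∅
  | fls => ∅
  | neg φ => φ.upreds
  | conj φ ψ => φ.upreds ∪ ψ.upreds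
  | disj φ ψ => φ.upreds ∪ ψ.upreds
  | impl φ ψ => φ.upreds ∪ ψ.upreds
  | all _ φ => φ.upreds
  | ex _ φ => φ.upreds

def bpreds : Fml U B → Set B
  | uatom _ _ => ∅
  | batom R _ _ => {R}
  | eqv _ _ => ∅
  | fls => ∅
  | neg φ => φ.bpreds
  | conj φ ψ => φ.bpreds ∪ ψ.bpreds
  | disj φ ψ => φ.bpreds ∪ ψ.bpreds
  | impl φ ψ => φ.bpreds ∪ ψ.bpreds
  | all _ φ => φ.bpreds
  | ex _ φ => φ.bpreds

def IsAtom : Fml U B → Prop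
  | uatom _ _ => True
  | batom _ _ _ => True
  | eqv _ _ => True
  | _ => False

def IsEqAtom : Fml U B → Prop
  | eqv _ _ => True
  | _ => False

/-- guarded quantifier depth (in GF² formulas every quantifier is guarded) -/
def gdepth : Fml U B → ℕ
  | uatom _ _ => 0
  | batom _ _ _ => 0
  | eqv _ _ => 0
  | fls => 0
  | neg φ => φ.gdepth
  | conj φ ψ => max φ.gdepth ψ.gdepth
  | disj φ ψ => max φ.gdepth ψ.gdepth
  | impl φ ψ => max φ.gdepth ψ.gdepth
  | all _ φ => φ.gdepth + 1
  | ex _ φ => φ.gdepth + 1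

/-- subformulas (including the formula itself) -/
def Subf : Fml U B → Set (Fml U B)
  | uatom P v => {uatom P v}
  | batom R v w => {batom R v w}
  | eqv v w => {eqv v w}
  | fls => {fls}
  | neg φ => insert (neg φ) φ.Subf
  | conj φ ψ => insert (conj φ ψ) (φ.Subf ∪ ψ.Subf)
  | disj φ ψ => insert (disj φ ψ) (φ.Subf ∪ ψ.Subf)
  | impl φ ψ => insert (impl φ ψ) (φ.Subf ∪ ψ.Subf)
  | all v φ => insert (all v φ) φ.Subf
  | ex v φ => insert (ex v φ) φ.Subf

/-- rename the free variables along `f` (bound variables untouched) -/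
def renameFree : (Var → Var) → Fml U B → Fml U B
  | f, uatom P v => uatom P (f v)
  | f, batom R v w => batom R (f v) (f w)
  | f, eqv v w => eqv (f v) (f w)
  | _, fls => fls
  | f, neg φ => neg (renameFree f φ)
  | f, conj φ ψ => conj (renameFree f φ) (renameFree f ψ)
  | f, disj φ ψ => disj (renameFree f φ) (renameFree f ψ)
  | f, impl φ ψ => impl (renameFree f φ) (renameFree f ψ)
  | f, all v φ => all v (renameFree (Function.update f v v) φ)
  | f, ex v φ => ex v (renameFree (Function.update f v v) φ)

end Fml

/-- The two-variable guarded fragment GF²: quantification only in the guarded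
patterns `∀v (α → φ)` and `∃v (α ∧ φ)` with `α` an atom containing all free
variables of `φ` as well as the quantified variable `v`. -/
inductive IsGF2 {U B : Type} : Fml U B → Prop
  | uatom (P : U) (v : Var) : IsGF2 (.uatom P v)
  | batom (R : B) (v w : Var) : IsGF2 (.batom R v w)
  | eqv (v w : Var) : IsGF2 (.eqv v w)
  | fls : IsGF2 .fls
  | neg {φ} : IsGF2 φ → IsGF2 (.neg φ)
  | conj {φ ψ} : IsGF2 φ → IsGF2 ψ → IsGF2 (.conj φ ψ)
  | disj {φ ψ} : IsGF2 φ → IsGF2 ψ → IsGF2 (.disj φ ψ)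
  | impl {φ ψ} : IsGF2 φ → IsGF2 ψ → IsGF2 (.impl φ ψ)
  | allG {v : Var} {α φ : Fml U B} :
      α.IsAtom → IsGF2 φ → φ.free ∪ {v} ⊆ α.free → IsGF2 (.all v (.impl α φ))
  | exG {v : Var} {α φ : Fml U B} :
      α.IsAtom → IsGF2 φ → φ.free ∪ {v} ⊆ α.free → IsGF2 (.ex v (.conj α φ))

/-- openGF²: GF² formulas with exactly one free variable, in which equality is
never used as a guard and which contain no subformula that is a sentence. -/
def IsOpenGF2 {U B : Type} (φ : Fml U B) : Prop :=
  IsGF2 φ ∧ (∃ v, φ.free = {v}) ∧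
  (∀ ψ ∈ φ.Subf, ¬ ψ.IsSentence) ∧
  (∀ ψ ∈ φ.Subf, ∀ (v : Var) (α χ : Fml U B),
      (ψ = .all v (.impl α χ) ∨ ψ = .ex v (.conj α χ)) → ¬ α.IsEqAtom)

/-- relational structures interpreting unary predicates `U` and binary
predicates `B` -/
structure Str (U B : Type) where
  Dom : Type
  nonempty : Nonempty Dom
  u : U → Dom → Prop
  b : B → Dom → Dom → Prop

def upd {D : Type} (σ : Var → D) (v : Var) (d : D) : Var → D :=
  fun w => if w = v then d else σ w

def Sat {U B : Type} (A : Str U B) : Fml U B → (Var → A.Dom) → Prop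
  | .uatom P v, σ => A.u P (σ v)
  | .batom R v w, σ => A.b R (σ v) (σ w)
  | .eqv v w, σ => σ v = σ w
  | .fls, _ => False
  | .neg φ, σ => ¬ Sat A φ σ
  | .conj φ ψ, σ => Sat A φ σ ∧ Sat A ψ σ
  | .disj φ ψ, σ => Sat A φ σ ∨ Sat A ψ σ
  | .impl φ ψ, σ => Sat A φ σ → Sat A ψ σ
  | .all v φ, σ => ∀ d : A.Dom, Sat A φ (upd σ v d)
  | .ex v φ, σ => ∃ d : A.Dom, Sat A φ (upd σ v d)

/-- truth of a sentence in a structure -/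
def SatS {U B : Type} (A : Str U B) (φ : Fml U B) : Prop := ∀ σ, Sat A φ σ

def Entails {U B : Type} (φ ψ : Fml U B) : Prop :=
  ∀ A : Str U B, SatS A φ → SatS A ψ

def Satisfiable {U B : Type} (φ : Fml U B) : Prop := ∃ A : Str U B, SatS A φ

/-- a GF²(Σ)-sentence, for the signature Σ = (SU, SB) -/
def IsGF2Sentence {U B : Type} (SU : Set U) (SB : Set B) (ψ : Fml U B) : Prop :=
  IsGF2 ψ ∧ ψ.IsSentence ∧ ψ.upreds ⊆ SU ∧ ψ.bpreds ⊆ SB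

/-- `φ₁ ⊨_Σ φ₂` : GF²(Σ)-entailment -/
def GF2Entails {U B : Type} (SU : Set U) (SB : Set B) (φ₁ φ₂ : Fml U B) : Prop :=
  ∀ ψ : Fml U B, IsGF2Sentence SU SB ψ → Entails φ₂ ψ → Entails φ₁ ψ

/-- atomic formulas in the variables x, y -/
inductive Atom2 (U B : Type) : Type
  | ua : U → Var → Atom2 U B
  | ba : B → Var → Var → Atom2 U B

def vval {D : Type} (a a' : D) : Var → D
  | .x => a
  | .y => a'

def Atom2.inSig {U B : Type} (SU : Set U) (SB : Set B) : Atom2 U B → Prop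
  | .ua P _ => P ∈ SU
  | .ba R _ _ => R ∈ SB

def Atom2.holds {U B : Type} (A : Str U B) (a a' : A.Dom) : Atom2 U B → Prop
  | .ua P v => A.u P (vval a a' v)
  | .ba R v w => A.b R (vval a a' v) (vval a a' w)

def Atom2.onlyX {U B : Type} : Atom2 U B → Prop
  | .ua _ v => v = Var.x
  | .ba _ v w => v = Var.x ∧ w = Var.x

/-- the atomic 1-type of `a` for the signature `(SU, SB)` (the set of
Σ-atoms in the single variable x satisfied by `a`; this determines the set of
negated atoms as well) -/
def atp1 {U B : Type} (A : Str U B) (SU : Set U) (SB : Set B) (a : A.Dom) :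
    Set (Atom2 U B) :=
  {α | α.onlyX ∧ α.inSig SU SB ∧ α.holds A a a}

/-- the atomic 2-type of `(a, a')` for the signature `(SU, SB)` (the set of
Σ-atoms in x, y satisfied by `(a, a')`; together with `a ≠ a'` this determines
the atomic 2-type) -/
def atp2 {U B : Type} (A : Str U B) (SU : Set U) (SB : Set B) (a a' : A.Dom) :
    Set (Atom2 U B) :=
  {α | α.inSig SU SB ∧ α.holds A a a'}

/-- the atomic 2-type of `(a, a')` is guarded (contains `R x y` or `R y x`
for some binary `R ∈ SB`) -/
def Guarded2 {U B : Type} (A : Str U B) (SB : Set B) (a a' : A.Dom) : Prop :=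
  ∃ R ∈ SB, A.b R a a' ∨ A.b R a' a

/-- GF²(Σ)-bisimulation between structures `A` and `Bm` -/
structure IsBisim {U B : Type} (A Bm : Str U B) (SU : Set U) (SB : Set B)
    (Z : A.Dom → Bm.Dom → Prop) : Prop where
  atom_eq : ∀ {a b}, Z a b → atp1 A SU SB a = atp1 Bm SU SB b
  forth : ∀ {a b}, Z a b → ∀ a', a' ≠ a → Guarded2 A SB a a' →
      ∃ b', b' ≠ b ∧ atp2 A SU SB a a' = atp2 Bm SU SB b b' ∧ Z a' b'
  back : ∀ {a b}, Z a b → ∀ b', b' ≠ b → Guarded2 Bm SB b b' →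
      ∃ a', a' ≠ a ∧ atp2 A SU SB a a' = atp2 Bm SU SB b b' ∧ Z a' b'

/-- `(A, a) ∼_Σ (Bm, b)` -/
def Bisim {U B : Type} (A Bm : Str U B) (SU : Set U) (SB : Set B)
    (a : A.Dom) (b : Bm.Dom) : Prop :=
  ∃ Z, IsBisim A Bm SU SB Z ∧ Z a b

/-- `(A, a) ∼ᵏ_Σ (Bm, b)` : k-GF²(Σ)-bisimilarity -/
def KBisim {U B : Type} (A Bm : Str U B) (SU : Set U) (SB : Set B) :
    ℕ → A.Dom → Bm.Dom → Prop
  | 0, a, b => atp1 A SU SB a = atp1 Bm SU SB b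
  | k+1, a, b => atp1 A SU SB a = atp1 Bm SU SB b ∧
      (∀ a', a' ≠ a → Guarded2 A SB a a' →
        ∃ b', b' ≠ b ∧ atp2 A SU SB a a' = atp2 Bm SU SB b b' ∧
          KBisim A Bm SU SB k a' b') ∧
      (∀ b', b' ≠ b → Guarded2 Bm SB b b' →
        ∃ a', a' ≠ a ∧ atp2 A SU SB a a' = atp2 Bm SU SB b b' ∧
          KBisim A Bm SU SB k a' b')

/-- a (full-signature) atomic 2-type, given as its set of positive atoms,
is guarded -/
def Guarded2Type {U B : Type} (τ : Set (Atom2 U B)) : Prop :=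
  ∃ R : B, Atom2.ba R Var.x Var.y ∈ τ ∨ Atom2.ba R Var.y Var.x ∈ τ

/-- successor-saturated structures -/
def SuccSaturated {U B : Type} (A : Str U B) : Prop :=
  ∀ (a : A.Dom) (τ : Set (Atom2 U B)) (Γ : Set (Fml U B)),
    Guarded2Type τ →
    (∀ ψ ∈ Γ, IsOpenGF2 ψ ∧ ψ.free = {Var.x}) →
    (∀ Γ' : Finset (Fml U B), ↑Γ' ⊆ Γ →
      ∃ a', a' ≠ a ∧ atp2 A Set.univ Set.univ a a' = τ ∧
        ∀ ψ ∈ Γ', Sat A ψ (fun _ => a')) →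
    ∃ b', b' ≠ a ∧ atp2 A Set.univ Set.univ a b' = τ ∧
      ∀ ψ ∈ Γ, Sat A ψ (fun _ => b')

/-- finite outdegree: every element stands in a guarded atomic 2-type (for the
full signature) to only finitely many elements -/
def FiniteOutdeg {U B : Type} (A : Str U B) : Prop :=
  ∀ a : A.Dom, {a' | a' ≠ a ∧ ∃ R : B, A.b R a a' ∨ A.b R a' a}.Finite

/-- Σ-adjacency (edges of the Gaifman graph of the Σ-reduct) -/
def SigAdj {U B : Type} (A : Str U B) (SB : Set B) (a a' : A.Dom) : Prop :=
  a ≠ a' ∧ ∃ R ∈ SB, A.b R a a' ∨ A.b R a' a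

/-- A forest structure: a structure whose Gaifman graph is a forest, directed
by choosing a root for each tree; `parent p c` says that `p` is the
predecessor (parent) of `c`. -/
structure Forest (U B : Type) extends Str U B where
  parent : Dom → Dom → Prop
  parent_unique : ∀ {c p p' : Dom}, parent p c → parent p' c → p = p'
  parent_wf : WellFounded parent
  adj_iff : ∀ a a' : Dom,
    (a ≠ a' ∧ ∃ R : B, b R a a' ∨ b R a' a) ↔ (parent a a' ∨ parent a' a)

namespace Forest

variable {U B : Type}

/-- `a` together with its descendants -/
def desc (F : Forest U B) (a : F.Dom) : Set F.Dom :=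
  {c | Relation.ReflTransGen F.parent a c}

/-- the subtrees rooted at `a` and at `a'` are isomorphic -/
def SubtreeIso (F : Forest U B) (a a' : F.Dom) : Prop :=
  ∃ f : (F.desc a) ≃ (F.desc a'),
    (f ⟨a, Relation.ReflTransGen.refl⟩).val = a' ∧
    (∀ c d : F.desc a, F.parent c.val d.val ↔ F.parent (f c).val (f d).val) ∧
    (∀ (P : U) (c : F.desc a), F.u P c.val ↔ F.u P (f c).val) ∧
    (∀ (R : B) (c d : F.desc a), F.b R c.val d.val ↔ F.b R (f c).val (f d).val)

/-- regular: only finitely many subtrees up to isomorphism -/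
def Regular (F : Forest U B) : Prop :=
  ∃ S : Set F.Dom, S.Finite ∧ ∀ a, ∃ a' ∈ S, F.SubtreeIso a' a

/-- `a ≺ a'` : `a` and `a'` lie in the same Σ-tree and `a` is a proper
ancestor of `a'` -/
def prec (F : Forest U B) (SB : Set B) (a a' : F.Dom) : Prop :=
  Relation.ReflTransGen (SigAdj F.toStr SB) a a' ∧ Relation.TransGen F.parent a a'

end Forest

/-- `a_⊥`-delimited GF²(Σ)-bisimulation: like a GF²(Σ)-bisimulation except that
the back-and-forth conditions are not required at pairs whose first component
is `abot` -/
structure IsPtDelimBisim {U B : Type} (A Bm : Str U B) (SU : Set U) (SB : Set B)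
    (abot : A.Dom) (Z : A.Dom → Bm.Dom → Prop) : Prop where
  atom_eq : ∀ {a b}, Z a b → atp1 A SU SB a = atp1 Bm SU SB b
  forth : ∀ {a b}, Z a b → a ≠ abot → ∀ a', a' ≠ a → Guarded2 A SB a a' →
      ∃ b', b' ≠ b ∧ atp2 A SU SB a a' = atp2 Bm SU SB b b' ∧ Z a' b'
  back : ∀ {a b}, Z a b → a ≠ abot → ∀ b', b' ≠ b → Guarded2 Bm SB b b' →
      ∃ a', a' ≠ a ∧ atp2 A SU SB a a' = atp2 Bm SU SB b b' ∧ Z a' b'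

/-- `(A, a) ∼^{a_⊥}_Σ (Bm, b)` -/
def PtDelimBisim {U B : Type} (A Bm : Str U B) (SU : Set U) (SB : Set B)
    (abot : A.Dom) (a : A.Dom) (b : Bm.Dom) : Prop :=
  ∃ Z, IsPtDelimBisim A Bm SU SB abot Z ∧ Z a b

/-- `A_⊥`-delimited GF²(Σ)-bisimulation between a forest structure `F` and a
structure `Bm`, given by a pair of relations `Z0 (∼⁰)` and `Z1 (∼¹)`. -/
structure IsDelimBisim {U B : Type} (F : Forest U B) (Bm : Str U B)
    (SU : Set U) (SB : Set B) (Abot : Set F.Dom)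
    (Z0 Z1 : F.Dom → Bm.Dom → Prop) : Prop where
  zero : ∀ {a b}, Z0 a b →
    atp1 F.toStr SU SB a = atp1 Bm SU SB b ∧
    (∀ a', a' ≠ a → Guarded2 F.toStr SB a a' →
      ∃ b', b' ≠ b ∧
        ((F.parent a' a ∧ a' ∈ Abot) → Z1 a' b') ∧
        (¬ (F.parent a' a ∧ a' ∈ Abot) → Z0 a' b')) ∧
    (∀ b', b' ≠ b → Guarded2 Bm SB b b' →
      ∃ a', a' ≠ a ∧
        ((F.parent a' a ∧ a' ∈ Abot) → Z1 a' b') ∧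
        (¬ (F.parent a' a ∧ a' ∈ Abot) → Z0 a' b'))
  one : ∀ {a b}, Z1 a b → (∀ p, F.parent p a → p ∉ Abot) →
    atp1 F.toStr SU SB a = atp1 Bm SU SB b ∧
    (∀ a', a' ≠ a → Guarded2 F.toStr SB a a' →
      ∃ b', b' ≠ b ∧
        ((F.parent a a' ∧ a ∈ Abot) → Z0 a' b') ∧
        (¬ (F.parent a a' ∧ a ∈ Abot) → Z1 a' b')) ∧
    (∀ b', b' ≠ b → Guarded2 Bm SB b b' →
      ∃ a', a' ≠ a ∧
        ((F.parent a a' ∧ a ∈ Abot) → Z0 a' b') ∧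
        (¬ (F.parent a a' ∧ a ∈ Abot) → Z1 a' b'))

/-- `(F, a) ∼^{A_⊥}_Σ (Bm, b)` -/
def DelimBisim {U B : Type} (F : Forest U B) (Bm : Str U B)
    (SU : Set U) (SB : Set B) (Abot : Set F.Dom) (a : F.Dom) (b : Bm.Dom) : Prop :=
  ∃ Z0 Z1, IsDelimBisim F Bm SU SB Abot Z0 Z1 ∧ Z0 a b

/-- `cl φ` : the subformulas of `φ` closed under single negation and renaming
of free variables (among x, y) -/
def clSet {U B : Type} (φ : Fml U B) : Set (Fml U B) :=
  {χ | ∃ ψ ∈ φ.Subf, ∃ f : Var → Var,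
      χ = ψ.renameFree f ∨ χ = .neg (ψ.renameFree f)}

/-- a 1-type for `φ₂`: a set of formulas `ψ(x)` from `cl φ₂` such that
`φ₂ ∧ ∃x ⋀ t(x)` is satisfiable -/
def OneType {U B : Type} (φ₂ : Fml U B) (t : Set (Fml U B)) : Prop :=
  t ⊆ clSet φ₂ ∧ (∀ ψ ∈ t, ψ.free ⊆ {Var.x}) ∧
  ∃ (A : Str U B) (a : A.Dom), SatS A φ₂ ∧ ∀ ψ ∈ t, Sat A ψ (fun _ => a)

/-- `tp_Bm(b)` : the 1-type of `b` in `Bm` (w.r.t. `φ₂`) -/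
def tpOf {U B : Type} (Bm : Str U B) (φ₂ : Fml U B) (b : Bm.Dom) :
    Set (Fml U B) :=
  {ψ | ψ ∈ clSet φ₂ ∧ ψ.free ⊆ {Var.x} ∧ Sat Bm ψ (fun _ => b)}

end GFC

/-
For the implication from right to left, suppose `φ₂ ⊨ ψ` but `φ₁ ∧ ¬ψ` has a model. Unravelling the
finite graph of its subformula types gives a regular forest model of `φ₁ ∧ ¬ψ` of finite outdegree.
A forest model of `φ₂` satisfying (1) and (2) agrees with it on `ψ`, because GF²(Σ)-sentences are
invariant under global `k`-bisimilarity for all `k`: a contradiction.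

For the converse let `𝔄` be a model of `φ₁` of finite outdegree. Over a finite signature
`k`-bisimilarity is decided by finitely many formulas, so `φ₁ ⊨_Σ φ₂` yields for each `k` a model
`𝔅ₖ` of `φ₂` globally `k`-bisimilar to `𝔄`. In an ultraproduct of the `𝔅ₖ` the relation
"`k`-bisimilar for all `k`" is a bisimulation with `𝔄`: the forth condition holds because
witnesses for the single levels `k` can be diagonalised along a nonprincipal ultrafilter, the back
condition because `𝔄` has finite outdegree. Unravelling the ultraproduct gives the required forest
model of `φ₂`.
-/

namespace GFC

variable {U B : Type}

/-! ### Syntax and satisfaction -/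

theorem Var.exists_ne (v : Var) : ∃ w, v ≠ w := by
  cases v
  exacts [⟨.y, by simp⟩, ⟨.x, by simp⟩]

theorem Var.eq_or_eq_of_ne {v w : Var} (hvw : v ≠ w) (u : Var) : u = v ∨ u = w := by
  cases u <;> cases v <;> cases w <;> simp_all

theorem Var.pair_eq_univ_of_ne {v w : Var} (hvw : v ≠ w) : ({v, w} : Set Var) = Set.univ :=
  Set.eq_univ_of_forall (Var.eq_or_eq_of_ne hvw)

theorem Var.eq_singleton_or_eq_univ {v : Var} {V : Set Var} (hv : v ∈ V) :
    V = {v} ∨ V = Set.univ := by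
  obtain ⟨w, hvw⟩ := v.exists_ne
  by_cases hw : w ∈ V
  · exact .inr (Set.eq_univ_of_forall fun u => by
      rcases Var.eq_or_eq_of_ne hvw u with rfl | rfl <;> assumption)
  · refine .inl (Set.eq_singleton_iff_unique_mem.2 ⟨hv, fun u hu => ?_⟩)
    exact (Var.eq_or_eq_of_ne hvw u).resolve_right fun h => hw (h ▸ hu)

instance Var.instFinite : Finite Var :=
  Set.finite_univ_iff.1 (Var.pair_eq_univ_of_ne (v := .x) (w := .y) (by simp) ▸ Set.toFinite _)

@[simp]
theorem upd_self {D : Type} (σ : Var → D) (v : Var) (d : D) : upd σ v d v = d := if_pos rfl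

theorem upd_of_ne {D : Type} (σ : Var → D) {v w : Var} (h : w ≠ v) (d : D) :
    upd σ v d w = σ w := if_neg h

theorem upd_congr {D : Type} {σ ρ : Var → D} {v w : Var} (d : D) (h : w ≠ v → σ w = ρ w) :
    upd σ v d w = upd ρ v d w := by
  by_cases hw : w = v
  · simp only [hw, upd_self]
  · rw [upd_of_ne _ hw, upd_of_ne _ hw, h hw]

theorem sat_congr {A : Str U B} {φ : Fml U B} {σ ρ : Var → A.Dom}
    (h : ∀ v ∈ φ.free, σ v = ρ v) : Sat A φ σ ↔ Sat A φ ρ := by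
  induction φ generalizing σ ρ with
  | uatom P v => simp only [Sat, h v rfl]
  | batom R v w => simp only [Sat, h v (.inl rfl), h w (.inr rfl)]
  | eqv v w => simp only [Sat, h v (.inl rfl), h w (.inr rfl)]
  | fls => rfl
  | neg φ ih => exact not_congr (ih h)
  | conj φ ψ ihφ ihψ | disj φ ψ ihφ ihψ | impl φ ψ ihφ ihψ =>
    simp only [Sat, ihφ fun v hv => h v (.inl hv), ihψ fun v hv => h v (.inr hv)]
  | all v φ ih => exact forall_congr' fun d => ih fun w hw => upd_congr d fun hwv => h w ⟨hw, hwv⟩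
  | ex v φ ih => exact exists_congr fun d => ih fun w hw => upd_congr d fun hwv => h w ⟨hw, hwv⟩

theorem Fml.IsSentence.sat_iff_satS {A : Str U B} {φ : Fml U B} (hφ : φ.IsSentence)
    (σ : Var → A.Dom) : Sat A φ σ ↔ SatS A φ :=
  ⟨fun h _ => (sat_congr fun v hv => absurd hv (hφ ▸ Set.notMem_empty v)).1 h, fun h => h σ⟩

theorem sat_all_impl_iff {A : Str U B} {v : Var} {α φ : Fml U B} {σ : Var → A.Dom} :
    Sat A (.all v (.impl α φ)) σ ↔ ¬ Sat A (.ex v (.conj α (.neg φ))) σ := by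
  simp only [Sat, not_exists, not_and, not_not]

theorem Fml.self_mem_Subf (φ : Fml U B) : φ ∈ φ.Subf := by
  cases φ <;> simp [Fml.Subf]

theorem Fml.finite_Subf (φ : Fml U B) : φ.Subf.Finite := by
  induction φ <;> simp_all [Fml.Subf]

theorem Fml.exists_uatom_mem_Subf {φ : Fml U B} {P : U} (hP : P ∈ φ.upreds) :
    ∃ v, Fml.uatom P v ∈ φ.Subf := by
  induction φ <;> simp_all [Fml.upreds, Fml.Subf] <;> grind

theorem Fml.exists_batom_mem_Subf {φ : Fml U B} {R : B} (hR : R ∈ φ.bpreds) :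
    ∃ v w, Fml.batom R v w ∈ φ.Subf := by
  induction φ <;> simp_all [Fml.bpreds, Fml.Subf] <;> grind

theorem Fml.finite_bpreds (φ : Fml U B) : φ.bpreds.Finite := by
  induction φ <;> simp_all [Fml.bpreds]

/-! ### Atomic types -/

section AtomicTypes

variable {A C : Str U B} {SU : Set U} {SB : Set B}

theorem atp1_eq_iff {a : A.Dom} {c : C.Dom} :
    atp1 A SU SB a = atp1 C SU SB c ↔
      (∀ P ∈ SU, (A.u P a ↔ C.u P c)) ∧ ∀ R ∈ SB, (A.b R a a ↔ C.b R c c) := by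
  refine ⟨fun h => ⟨fun P hP => ?_, fun R hR => ?_⟩, fun ⟨hu, hb⟩ => Set.ext fun α => ?_⟩
  · simpa [atp1, Atom2.onlyX, Atom2.inSig, Atom2.holds, vval, hP] using Set.ext_iff.1 h (.ua P .x)
  · simpa [atp1, Atom2.onlyX, Atom2.inSig, Atom2.holds, vval, hR] using
      Set.ext_iff.1 h (.ba R .x .x)
  · rcases α with ⟨P, _ | _⟩ | ⟨R, _ | _, _ | _⟩ <;>
      simp +contextual [atp1, Atom2.onlyX, Atom2.inSig, Atom2.holds, vval, hu, hb]

theorem atp2_eq_iff {a a' : A.Dom} {c c' : C.Dom} :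
    atp2 A SU SB a a' = atp2 C SU SB c c' ↔
      atp1 A SU SB a = atp1 C SU SB c ∧ atp1 A SU SB a' = atp1 C SU SB c' ∧
      ∀ R ∈ SB, (A.b R a a' ↔ C.b R c c') ∧ (A.b R a' a ↔ C.b R c' c) := by
  rw [atp1_eq_iff, atp1_eq_iff]
  refine ⟨fun h => ?_, fun ⟨⟨hu, hb⟩, ⟨hu', hb'⟩, hbb⟩ => Set.ext fun α => ?_⟩
  · have hu P v := Set.ext_iff.1 h (.ua P v)
    have hb R v w := Set.ext_iff.1 h (.ba R v w)
    simp only [atp2, Atom2.inSig, Atom2.holds, Set.mem_ofPred_eq, and_congr_right_iff] at hu hb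
    exact ⟨⟨(hu · .x), (hb · .x .x)⟩, ⟨(hu · .y), (hb · .y .y)⟩,
      fun R hR => ⟨hb R .x .y hR, hb R .y .x hR⟩⟩
  · rcases α with ⟨P, _ | _⟩ | ⟨R, _ | _, _ | _⟩ <;>
      simp +contextual [atp2, Atom2.inSig, Atom2.holds, vval, hu, hu', hb, hb', hbb]

theorem guarded2_congr {a a' : A.Dom} {c c' : C.Dom}
    (h : atp2 A SU SB a a' = atp2 C SU SB c c') : Guarded2 A SB a a' ↔ Guarded2 C SB c c' :=
  exists_congr fun R => and_congr_right fun hR => by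
    rw [((atp2_eq_iff.1 h).2.2 R hR).1, ((atp2_eq_iff.1 h).2.2 R hR).2]

/-- The atomic formulas, including equalities, over the signature `(SU, SB)` with variables
in `V`. -/
def sigAtoms (SU : Set U) (SB : Set B) (V : Set Var) : Set (Fml U B) :=
  {α | α.IsAtom ∧ α.free ⊆ V ∧ α.upreds ⊆ SU ∧ α.bpreds ⊆ SB}

theorem finite_sigAtoms (hSU : SU.Finite) (hSB : SB.Finite) (V : Set Var) :
    (sigAtoms SU SB V).Finite := by
  have hu : (Set.image2 Fml.uatom SU Set.univ : Set (Fml U B)).Finite :=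
    hSU.image2 _ Set.finite_univ
  have hb : (Set.image2 (fun R (p : Var × Var) => Fml.batom R p.1 p.2) SB Set.univ :
      Set (Fml U B)).Finite := hSB.image2 _ Set.finite_univ
  have he : (Set.range fun p : Var × Var => (Fml.eqv p.1 p.2 : Fml U B)).Finite :=
    Set.finite_range _
  refine ((hu.union hb).union he).subset fun α hα => ?_
  cases α <;> simp_all [sigAtoms, Fml.IsAtom, Fml.upreds, Fml.bpreds]

/-- The assignments `σ` and `ρ` satisfy the same atoms over `(SU, SB)` in the variables `V`. -/
def SameAtoms (A C : Str U B) (SU : Set U) (SB : Set B) (V : Set Var)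
    (σ : Var → A.Dom) (ρ : Var → C.Dom) : Prop :=
  ∀ α ∈ sigAtoms SU SB V, (Sat A α σ ↔ Sat C α ρ)

theorem SameAtoms.mono {V W : Set Var} {σ : Var → A.Dom} {ρ : Var → C.Dom}
    (h : SameAtoms A C SU SB V σ ρ) (hW : W ⊆ V) : SameAtoms A C SU SB W σ ρ :=
  fun α hα => h α ⟨hα.1, hα.2.1.trans hW, hα.2.2⟩

theorem sameAtoms_iff {V : Set Var} {σ : Var → A.Dom} {ρ : Var → C.Dom} :
    SameAtoms A C SU SB V σ ρ ↔
      (∀ v ∈ V, ∀ P ∈ SU, (A.u P (σ v) ↔ C.u P (ρ v))) ∧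
      (∀ v ∈ V, ∀ w ∈ V, ∀ R ∈ SB, (A.b R (σ v) (σ w) ↔ C.b R (ρ v) (ρ w))) ∧
      ∀ v ∈ V, ∀ w ∈ V, (σ v = σ w ↔ ρ v = ρ w) := by
  refine ⟨fun h => ⟨fun v hv P hP => h (.uatom P v) ?_, fun v hv w hw R hR => h (.batom R v w) ?_,
    fun v hv w hw => h (.eqv v w) ?_⟩, fun ⟨hu, hb, he⟩ α => ?_⟩
  iterate 3
    simp [sigAtoms, Fml.IsAtom, Fml.free, Fml.upreds, Fml.bpreds, Set.insert_subset_iff, *]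
  cases α <;>
    simp +contextual [sigAtoms, Fml.IsAtom, Fml.free, Fml.upreds, Fml.bpreds, Sat,
      Set.insert_subset_iff, hu, hb, he]

theorem sameAtoms_singleton_iff {v : Var} {σ : Var → A.Dom} {ρ : Var → C.Dom} :
    SameAtoms A C SU SB {v} σ ρ ↔ atp1 A SU SB (σ v) = atp1 C SU SB (ρ v) := by
  simp [sameAtoms_iff, atp1_eq_iff]

theorem sameAtoms_univ_iff {v w : Var} (hvw : v ≠ w) {σ : Var → A.Dom} {ρ : Var → C.Dom} :
    SameAtoms A C SU SB Set.univ σ ρ ↔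
      atp2 A SU SB (σ v) (σ w) = atp2 C SU SB (ρ v) (ρ w) ∧ (σ v = σ w ↔ ρ v = ρ w) := by
  simp only [sameAtoms_iff, ← Var.pair_eq_univ_of_ne hvw, Set.forall_mem_insert,
    Set.mem_singleton_iff, forall_eq, atp2_eq_iff, atp1_eq_iff, eq_comm (a := σ w),
    eq_comm (a := ρ w), true_and, and_true, forall_and]
  tauto

theorem guarded2_iff_exists_sat_atom (SU : Set U) {v w : Var} (hvw : v ≠ w) {σ : Var → A.Dom}
    (hne : σ v ≠ σ w) :
    Guarded2 A SB (σ v) (σ w) ↔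
      ∃ α ∈ sigAtoms SU SB Set.univ, α.free = Set.univ ∧ Sat A α σ := by
  constructor
  · rintro ⟨R, hR, h | h⟩
    · exact ⟨.batom R v w, ⟨trivial, Set.subset_univ _, Set.empty_subset _,
        Set.singleton_subset_iff.2 hR⟩, Var.pair_eq_univ_of_ne hvw, h⟩
    · exact ⟨.batom R w v, ⟨trivial, Set.subset_univ _, Set.empty_subset _,
        Set.singleton_subset_iff.2 hR⟩, Var.pair_eq_univ_of_ne hvw.symm, h⟩
  · rintro ⟨α, ⟨hα, -, -, hB⟩, hfree, h⟩
    have hv : v ∈ α.free := hfree ▸ trivial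
    have hw : w ∈ α.free := hfree ▸ trivial
    cases α with
    | uatom P u => exact absurd (hv.trans hw.symm) hvw
    | batom R u u' => refine ⟨R, hB rfl, ?_⟩; grind [Fml.free, Sat]
    | eqv u u' => grind [Fml.free, Sat]
    | _ => exact hα.elim

end AtomicTypes

/-! ### Types relative to a set of formulas -/

section LocalTypes

variable {A C : Str U B} {S : Set (Fml U B)}

/-- The formulas of `S` that hold when all variables are assigned `a`. For a formula with at most
one free variable this is satisfaction at `a`, whatever the name of its variable. -/
def localType (S : Set (Fml U B)) (A : Str U B) (a : A.Dom) : Set (Fml U B) :=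
  {χ ∈ S | Sat A χ fun _ => a}

theorem localType_eq_iff {a : A.Dom} {c : C.Dom} :
    localType S A a = localType S C c ↔ ∀ χ ∈ S, (Sat A χ (fun _ => a) ↔ Sat C χ fun _ => c) := by
  simp only [localType, Set.ext_iff, Set.mem_ofPred_eq, and_congr_right_iff]

theorem finite_range_localType (hS : S.Finite) (A : Str U B) :
    (Set.range (localType S A)).Finite :=
  hS.finite_subsets.subset <| Set.range_subset_iff.2 fun _ => Set.sep_subset _ _

/-- Satisfaction of `χ` depends only on the `S`-types of the values of the variables other
than `v`. -/
def DeterminedByTypes (S : Set (Fml U B)) (v : Var) (χ : Fml U B) : Prop :=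
  ∀ (A : Str U B) (σ ρ : Var → A.Dom),
    (∀ w, w ≠ v → localType S A (σ w) = localType S A (ρ w)) → (Sat A χ σ ↔ Sat A χ ρ)

theorem determinedByTypes_of_mem {v : Var} {χ : Fml U B} (hχ : χ ∈ S) (hv : v ∉ χ.free) :
    DeterminedByTypes S v χ := by
  intro A σ ρ h
  obtain ⟨w, hvw⟩ := v.exists_ne
  have sat_iff_const (τ : Var → A.Dom) : Sat A χ τ ↔ Sat A χ fun _ => τ w :=
    sat_congr fun u hu => by
      rw [(Var.eq_or_eq_of_ne hvw u).resolve_left fun huv => hv (huv ▸ hu)]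
  rw [sat_iff_const σ, sat_iff_const ρ, localType_eq_iff.1 (h w hvw.symm) χ hχ]

theorem DeterminedByTypes.ex_neg {v : Var} {α φ : Fml U B}
    (h : DeterminedByTypes S v (.all v (.impl α φ))) :
    DeterminedByTypes S v (.ex v (.conj α (.neg φ))) := fun A σ ρ hσρ => by
  simpa only [sat_all_impl_iff, not_iff_not] using h A σ ρ hσρ

end LocalTypes

/-! ### Bisimulations -/

section Bisimulations

variable {A C D : Str U B} {SU SU' : Set U} {SB SB' : Set B}

/-- The local conditions on a bisimulation at the pair `(a, c)`, with successors matched in `Z`.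
Taking `Z` to be `k`-bisimilarity gives `(k + 1)`-bisimilarity. -/
def BackAndForth (A C : Str U B) (SU : Set U) (SB : Set B) (Z : A.Dom → C.Dom → Prop)
    (a : A.Dom) (c : C.Dom) : Prop :=
  atp1 A SU SB a = atp1 C SU SB c ∧
    (∀ a', a' ≠ a → Guarded2 A SB a a' →
      ∃ c', c' ≠ c ∧ atp2 A SU SB a a' = atp2 C SU SB c c' ∧ Z a' c') ∧
    ∀ c', c' ≠ c → Guarded2 C SB c c' →
      ∃ a', a' ≠ a ∧ atp2 A SU SB a a' = atp2 C SU SB c c' ∧ Z a' c'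

theorem isBisim_iff {Z : A.Dom → C.Dom → Prop} :
    IsBisim A C SU SB Z ↔ ∀ a c, Z a c → BackAndForth A C SU SB Z a c :=
  ⟨fun h _ _ hac => ⟨h.atom_eq hac, h.forth hac, h.back hac⟩,
    fun h => ⟨fun hac => (h _ _ hac).1, fun hac => (h _ _ hac).2.1, fun hac => (h _ _ hac).2.2⟩⟩

theorem BackAndForth.mono {Z Z' : A.Dom → C.Dom → Prop} {a : A.Dom} {c : C.Dom}
    (h : BackAndForth A C SU SB Z a c) (hZ : ∀ a c, Z a c → Z' a c) :
    BackAndForth A C SU SB Z' a c :=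
  ⟨h.1,
    fun a' hne hg => (h.2.1 a' hne hg).imp fun _ ⟨hne', hatp, hz⟩ => ⟨hne', hatp, hZ _ _ hz⟩,
    fun c' hne hg => (h.2.2 c' hne hg).imp fun _ ⟨hne', hatp, hz⟩ => ⟨hne', hatp, hZ _ _ hz⟩⟩

theorem BackAndForth.comp {Z : A.Dom → C.Dom → Prop} {Z' : C.Dom → D.Dom → Prop}
    {a : A.Dom} {c : C.Dom} {d : D.Dom} (h : BackAndForth A C SU SB Z a c)
    (h' : BackAndForth C D SU SB Z' c d) : BackAndForth A D SU SB (Relation.Comp Z Z') a d := by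
  refine ⟨h.1.trans h'.1, fun a' hne hg => ?_, fun d' hne hg => ?_⟩
  · obtain ⟨c', hne, hatp, hz⟩ := h.2.1 a' hne hg
    obtain ⟨d', hne, hatp', hz'⟩ := h'.2.1 c' hne ((guarded2_congr hatp).1 hg)
    exact ⟨d', hne, hatp.trans hatp', c', hz, hz'⟩
  · obtain ⟨c', hne, hatp', hz'⟩ := h'.2.2 d' hne hg
    obtain ⟨a', hne, hatp, hz⟩ := h.2.2 c' hne ((guarded2_congr hatp').2 hg)
    exact ⟨a', hne, hatp.trans hatp', c', hz, hz'⟩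

theorem atp1_eq_of_subset (hSU : SU' ⊆ SU) (hSB : SB' ⊆ SB) {a : A.Dom} {c : C.Dom}
    (h : atp1 A SU SB a = atp1 C SU SB c) : atp1 A SU' SB' a = atp1 C SU' SB' c :=
  atp1_eq_iff.2 ⟨fun P hP => (atp1_eq_iff.1 h).1 P (hSU hP),
    fun R hR => (atp1_eq_iff.1 h).2 R (hSB hR)⟩

theorem atp2_eq_of_subset (hSU : SU' ⊆ SU) (hSB : SB' ⊆ SB) {a a' : A.Dom} {c c' : C.Dom}
    (h : atp2 A SU SB a a' = atp2 C SU SB c c') :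
    atp2 A SU' SB' a a' = atp2 C SU' SB' c c' := by
  obtain ⟨ha, ha', hb⟩ := atp2_eq_iff.1 h
  exact atp2_eq_iff.2 ⟨atp1_eq_of_subset hSU hSB ha, atp1_eq_of_subset hSU hSB ha',
    fun R hR => hb R (hSB hR)⟩

theorem Guarded2.mono (hSB : SB' ⊆ SB) {a a' : A.Dom} (h : Guarded2 A SB' a a') :
    Guarded2 A SB a a' :=
  h.imp fun _ ⟨hR, hb⟩ => ⟨hSB hR, hb⟩

theorem IsBisim.of_subset (hSU : SU' ⊆ SU) (hSB : SB' ⊆ SB) {Z : A.Dom → C.Dom → Prop}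
    (h : IsBisim A C SU SB Z) : IsBisim A C SU' SB' Z where
  atom_eq hac := atp1_eq_of_subset hSU hSB (h.atom_eq hac)
  forth hac a' hne hg := (h.forth hac a' hne (hg.mono hSB)).imp
    fun _ ⟨hne', hatp, hz⟩ => ⟨hne', atp2_eq_of_subset hSU hSB hatp, hz⟩
  back hac c' hne hg := (h.back hac c' hne (hg.mono hSB)).imp
    fun _ ⟨hne', hatp, hz⟩ => ⟨hne', atp2_eq_of_subset hSU hSB hatp, hz⟩

theorem Bisim.of_subset (hSU : SU' ⊆ SU) (hSB : SB' ⊆ SB) {a : A.Dom} {c : C.Dom}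
    (h : Bisim A C SU SB a c) : Bisim A C SU' SB' a c :=
  h.imp fun _ hZ => ⟨hZ.1.of_subset hSU hSB, hZ.2⟩

theorem Bisim.trans {a : A.Dom} {c : C.Dom} {d : D.Dom} (h : Bisim A C SU SB a c)
    (h' : Bisim C D SU SB c d) : Bisim A D SU SB a d := by
  obtain ⟨Z, hZ, hac⟩ := h
  obtain ⟨Z', hZ', hcd⟩ := h'
  refine ⟨Relation.Comp Z Z', isBisim_iff.2 ?_, c, hac, hcd⟩
  rintro a d ⟨c, hac, hcd⟩
  exact (isBisim_iff.1 hZ a c hac).comp (isBisim_iff.1 hZ' c d hcd)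

theorem KBisim.atp1_eq {k : ℕ} {a : A.Dom} {c : C.Dom} (h : KBisim A C SU SB k a c) :
    atp1 A SU SB a = atp1 C SU SB c := by
  cases k with
  | zero => exact h
  | succ k => exact h.1

theorem KBisim.of_succ {k : ℕ} {a : A.Dom} {c : C.Dom} (h : KBisim A C SU SB (k + 1) a c) :
    KBisim A C SU SB k a c := by
  induction k generalizing a c with
  | zero => exact h.atp1_eq
  | succ k ih => exact BackAndForth.mono h fun _ _ => ih

theorem KBisim.of_le {k l : ℕ} (hkl : k ≤ l) {a : A.Dom} {c : C.Dom}
    (h : KBisim A C SU SB l a c) : KBisim A C SU SB k a c :=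
  Nat.decreasingInduction (fun _ _ => KBisim.of_succ) h hkl

theorem KBisim.trans {k : ℕ} {a : A.Dom} {c : C.Dom} {d : D.Dom} (h : KBisim A C SU SB k a c)
    (h' : KBisim C D SU SB k c d) : KBisim A D SU SB k a d := by
  induction k generalizing a c d with
  | zero => exact Eq.trans h h'
  | succ k ih => exact (BackAndForth.comp h h').mono fun _ _ ⟨_, hz, hz'⟩ => ih hz hz'

theorem IsBisim.kBisim {Z : A.Dom → C.Dom → Prop} (hZ : IsBisim A C SU SB Z) {a : A.Dom}
    {c : C.Dom} (hac : Z a c) (k : ℕ) : KBisim A C SU SB k a c := by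
  induction k generalizing a c with
  | zero => exact hZ.atom_eq hac
  | succ k ih => exact (isBisim_iff.1 hZ a c hac).mono fun _ _ => ih

theorem Bisim.kBisim {a : A.Dom} {c : C.Dom} (h : Bisim A C SU SB a c) (k : ℕ) :
    KBisim A C SU SB k a c :=
  let ⟨_, hZ, hac⟩ := h
  hZ.kBisim hac k

/-- Global `k`-bisimilarity: every element of each structure is `k`-bisimilar to some element of
the other. -/
def GloballyKBisim (A C : Str U B) (SU : Set U) (SB : Set B) (k : ℕ) : Prop :=
  (∀ a, ∃ c, KBisim A C SU SB k a c) ∧ ∀ c, ∃ a, KBisim A C SU SB k a c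

end Bisimulations

/-! ### Invariance of guarded sentences -/

section Invariance

variable {A C : Str U B} {SU : Set U} {SB : Set B} {S : Set (Fml U B)}

/-- A decreasing sequence of relations `T k` matching successors like `k`-bisimilarity, except that
the matching successor of `c` may be attached to another element `c₀` of the same `S`-type (and
likewise for `a`). This freedom is what identifying the elements of a structure of equal `S`-type
requires. -/
structure LayeredBisim (A C : Str U B) (SU : Set U) (SB : Set B) (S : Set (Fml U B))
    (T : ℕ → A.Dom → C.Dom → Prop) : Prop where
  of_succ : ∀ {k a c}, T (k + 1) a c → T k a c
  atp1_eq : ∀ {k a c}, T k a c → atp1 A SU SB a = atp1 C SU SB c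
  left_total : ∀ k a, ∃ c, T k a c
  right_total : ∀ k c, ∃ a, T k a c
  forth : ∀ {k a c}, T (k + 1) a c → ∀ a', a' ≠ a → Guarded2 A SB a a' →
    ∃ c₀ c', localType S C c = localType S C c₀ ∧ T k a c₀ ∧ c' ≠ c₀ ∧
      atp2 A SU SB a a' = atp2 C SU SB c₀ c' ∧ T k a' c'
  back : ∀ {k a c}, T (k + 1) a c → ∀ c', c' ≠ c → Guarded2 C SB c c' →
    ∃ a₀ a', localType S A a = localType S A a₀ ∧ T k a₀ c ∧ a' ≠ a₀ ∧
      atp2 A SU SB a₀ a' = atp2 C SU SB c c' ∧ T k a' c'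

theorem layeredBisim_kBisim (h : ∀ k, GloballyKBisim A C SU SB k) :
    LayeredBisim A C SU SB S (KBisim A C SU SB) where
  of_succ := KBisim.of_succ
  atp1_eq := KBisim.atp1_eq
  left_total k := (h k).1
  right_total k := (h k).2
  forth hac a' hne hg :=
    let ⟨c', hne', hatp, hz⟩ := hac.2.1 a' hne hg
    ⟨_, c', rfl, hac.of_succ, hne', hatp, hz⟩
  back hac c' hne hg :=
    let ⟨a', hne', hatp, hz⟩ := hac.2.2 c' hne hg
    ⟨_, a', rfl, hac.of_succ, hne', hatp, hz⟩

/-- Corresponding values of `σ` and `ρ` on `V` are `T`-related, and the two assignments satisfy the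
same atoms in `V`. -/
structure Related (A C : Str U B) (SU : Set U) (SB : Set B) (T : A.Dom → C.Dom → Prop)
    (V : Set Var) (σ : Var → A.Dom) (ρ : Var → C.Dom) : Prop where
  rel : ∀ v ∈ V, T (σ v) (ρ v)
  sameAtoms : SameAtoms A C SU SB V σ ρ

section Related

variable {T : A.Dom → C.Dom → Prop} {V W : Set Var} {σ : Var → A.Dom} {ρ : Var → C.Dom}

theorem Related.mono (h : Related A C SU SB T V σ ρ) (hW : W ⊆ V) : Related A C SU SB T W σ ρ :=
  ⟨fun v hv => h.rel v (hW hv), h.sameAtoms.mono hW⟩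

theorem Related.symm (h : Related A C SU SB T V σ ρ) :
    Related C A SU SB (fun c a => T a c) V ρ σ :=
  ⟨h.rel, fun α hα => (h.sameAtoms α hα).symm⟩

theorem related_empty : Related A C SU SB T ∅ σ ρ :=
  ⟨fun _ => False.elim, by simp [sameAtoms_iff]⟩

theorem related_singleton {v : Var} (hT : T (σ v) (ρ v))
    (hatp : atp1 A SU SB (σ v) = atp1 C SU SB (ρ v)) : Related A C SU SB T {v} σ ρ :=
  ⟨fun _ hw => hw ▸ hT, sameAtoms_singleton_iff.2 hatp⟩

theorem related_univ {v w : Var} (hvw : v ≠ w) (hv : T (σ v) (ρ v)) (hw : T (σ w) (ρ w))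
    (hatp : atp2 A SU SB (σ v) (σ w) = atp2 C SU SB (ρ v) (ρ w))
    (heq : σ v = σ w ↔ ρ v = ρ w) : Related A C SU SB T Set.univ σ ρ :=
  ⟨fun u _ => by rcases Var.eq_or_eq_of_ne hvw u with rfl | rfl <;> assumption,
    (sameAtoms_univ_iff hvw).2 ⟨hatp, heq⟩⟩

end Related

namespace LayeredBisim

variable {T : ℕ → A.Dom → C.Dom → Prop} {k : ℕ} {σ : Var → A.Dom} {ρ : Var → C.Dom}
  {v : Var} {α φ χ : Fml U B}

theorem symm (H : LayeredBisim A C SU SB S T) :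
    LayeredBisim C A SU SB S fun k c a => T k a c where
  of_succ := H.of_succ
  atp1_eq h := (H.atp1_eq h).symm
  left_total := H.right_total
  right_total := H.left_total
  forth h c' hne hg :=
    let ⟨a₀, a', htype, h₀, hne', hatp, h'⟩ := H.back h c' hne hg
    ⟨a₀, a', htype, h₀, hne', hatp.symm, h'⟩
  back h a' hne hg :=
    let ⟨c₀, c', htype, h₀, hne', hatp, h'⟩ := H.forth h a' hne hg
    ⟨c₀, c', htype, h₀, hne', hatp.symm, h'⟩

theorem exists_related_upd (H : LayeredBisim A C SU SB S T) (hα : α ∈ sigAtoms SU SB Set.univ)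
    (hv : v ∈ α.free) (h : Related A C SU SB (T (k + 1)) (α.free \ {v}) σ ρ) {d : A.Dom}
    (hd : Sat A α (upd σ v d)) :
    ∃ ρ' e, (∀ w, w ≠ v → localType S C (ρ w) = localType S C (ρ' w)) ∧
      Related A C SU SB (T k) α.free (upd σ v d) (upd ρ' v e) := by
  rcases Var.eq_singleton_or_eq_univ hv with hfree | hfree
  · obtain ⟨e, he⟩ := H.left_total k d
    refine ⟨ρ, e, fun _ _ => rfl, hfree ▸ related_singleton ?_ ?_⟩
    · simpa only [upd_self] using he
    · simpa only [upd_self] using H.atp1_eq he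
  obtain ⟨w, hvw⟩ := v.exists_ne
  have hT : T (k + 1) (σ w) (ρ w) := h.rel w ⟨hfree ▸ trivial, hvw.symm⟩
  rw [hfree]
  by_cases hdw : d = σ w
  · have hatp := H.atp1_eq hT
    refine ⟨ρ, ρ w, fun _ _ => rfl, related_univ hvw ?_ ?_ ?_ ?_⟩ <;>
      simp only [upd_self, upd_of_ne _ hvw.symm, hdw]
    · exact H.of_succ hT
    · exact H.of_succ hT
    · have hloop R hR := (atp1_eq_iff.1 hatp).2 R hR
      exact atp2_eq_iff.2 ⟨hatp, hatp, fun R hR => ⟨hloop R hR, hloop R hR⟩⟩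
  · have hguarded : Guarded2 A SB (σ w) d := by
      have := (guarded2_iff_exists_sat_atom SU hvw.symm (σ := upd σ v d) (SB := SB)
        (by simpa [upd_of_ne _ hvw.symm] using Ne.symm hdw)).2 ⟨α, hα, hfree, hd⟩
      simpa [upd_of_ne _ hvw.symm] using this
    obtain ⟨c₀, c', htype, hT₀, hne, hatp, hT'⟩ := H.forth hT d hdw hguarded
    refine ⟨fun _ => c₀, c', fun u hu => ?_, related_univ hvw.symm ?_ ?_ ?_ ?_⟩
    · rwa [(Var.eq_or_eq_of_ne hvw u).resolve_left hu]
    all_goals simp only [upd_self, upd_of_ne _ hvw.symm]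
    exacts [hT₀, hT', hatp, iff_of_false (Ne.symm hdw) hne.symm]

theorem sat_ex_of_sat_ex (H : LayeredBisim A C SU SB S T) (hα : α ∈ sigAtoms SU SB Set.univ)
    (hfree : φ.free ∪ {v} ⊆ α.free) (hdet : DeterminedByTypes S v (.ex v (.conj α φ)))
    (hφ : ∀ σ ρ, Related A C SU SB (T k) φ.free σ ρ → (Sat A φ σ ↔ Sat C φ ρ))
    (h : Related A C SU SB (T (k + 1)) (α.free \ {v}) σ ρ)
    (hσ : Sat A (.ex v (.conj α φ)) σ) : Sat C (.ex v (.conj α φ)) ρ := by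
  obtain ⟨d, hdα, hdφ⟩ := hσ
  obtain ⟨ρ', e, htype, hrel⟩ := H.exists_related_upd hα (hfree (.inr rfl)) h hdα
  refine (hdet C ρ ρ' htype).2 ⟨e, ?_, ?_⟩
  · exact (hrel.sameAtoms α ⟨hα.1, subset_rfl, hα.2.2⟩).1 hdα
  · exact (hφ _ _ (hrel.mono (Set.union_subset_iff.1 hfree).1)).1 hdφ

theorem sat_ex_iff (H : LayeredBisim A C SU SB S T) (hα : α ∈ sigAtoms SU SB Set.univ)
    (hfree : φ.free ∪ {v} ⊆ α.free) (hdet : DeterminedByTypes S v (.ex v (.conj α φ)))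
    (hφ : ∀ σ ρ, Related A C SU SB (T k) φ.free σ ρ → (Sat A φ σ ↔ Sat C φ ρ))
    (h : Related A C SU SB (T (k + 1)) (α.free \ {v}) σ ρ) :
    Sat A (.ex v (.conj α φ)) σ ↔ Sat C (.ex v (.conj α φ)) ρ :=
  ⟨H.sat_ex_of_sat_ex hα hfree hdet hφ h,
    H.symm.sat_ex_of_sat_ex hα hfree hdet (fun σ ρ hr => (hφ ρ σ hr.symm).symm) h.symm⟩

theorem sat_iff (H : LayeredBisim A C SU SB S T) (hχ : IsGF2 χ) (hS : χ.Subf ⊆ S)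
    (hU : χ.upreds ⊆ SU) (hB : χ.bpreds ⊆ SB) (hk : χ.gdepth ≤ k)
    (h : Related A C SU SB (T k) χ.free σ ρ) : Sat A χ σ ↔ Sat C χ ρ := by
  induction hχ generalizing k σ ρ with
  | uatom | batom | eqv => exact h.sameAtoms _ ⟨trivial, subset_rfl, hU, hB⟩
  | fls => rfl
  | neg _ ih => exact not_congr (ih ((Set.subset_insert _ _).trans hS) hU hB hk h)
  | conj _ _ ihφ ihψ | disj _ _ ihφ ihψ | impl _ _ ihφ ihψ =>
    have hS' := Set.union_subset_iff.1 ((Set.subset_insert _ _).trans hS)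
    have hU' := Set.union_subset_iff.1 hU
    have hB' := Set.union_subset_iff.1 hB
    have hk' := max_le_iff.1 hk
    simp only [Sat, ihφ hS'.1 hU'.1 hB'.1 hk'.1 (h.mono Set.subset_union_left),
      ihψ hS'.2 hU'.2 hB'.2 hk'.2 (h.mono Set.subset_union_right)]
  | @allG v α φ hα _ hfree ih | @exG v α φ hα _ hfree ih =>
    have hU' := Set.union_subset_iff.1 hU
    have hB' := Set.union_subset_iff.1 hB
    have hSφ : φ.Subf ⊆ S := fun _ hψ => hS (.inr (.inr (.inr hψ)))
    have hdet := determinedByTypes_of_mem (v := v) (hS (Fml.self_mem_Subf _)) fun hv => hv.2 rfl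
    obtain ⟨k, rfl⟩ := Nat.exists_eq_add_one_of_ne_zero (Nat.ne_zero_of_lt hk)
    have hkφ : φ.gdepth ≤ k := (le_max_right _ _).trans (Nat.succ_le_succ_iff.1 hk)
    have hφ σ ρ (hr : Related A C SU SB (T k) φ.free σ ρ) := ih hSφ hU'.2 hB'.2 hkφ hr
    have hα_mem : α ∈ sigAtoms SU SB Set.univ := ⟨hα, Set.subset_univ _, hU'.1, hB'.1⟩
    replace h := h.mono (W := α.free \ {v}) (Set.sdiff_subset_sdiff_left Set.subset_union_left)
    first
    | exact H.sat_ex_iff hα_mem hfree hdet hφ h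
    | simp only [sat_all_impl_iff]
      exact not_congr (H.sat_ex_iff (φ := .neg φ) hα_mem hfree hdet.ex_neg
        (fun σ ρ hr => not_congr (hφ σ ρ hr)) h)

theorem satS_iff (H : LayeredBisim A C SU SB S T) (hχ : IsGF2 χ) (hs : χ.IsSentence)
    (hS : χ.Subf ⊆ S) (hU : χ.upreds ⊆ SU) (hB : χ.bpreds ⊆ SB) : SatS A χ ↔ SatS C χ := by
  obtain ⟨a⟩ := A.nonempty
  obtain ⟨c⟩ := C.nonempty
  rw [← hs.sat_iff_satS fun _ => a, ← hs.sat_iff_satS fun _ => c]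
  exact H.sat_iff hχ hS hU hB le_rfl (hs.symm ▸ related_empty)

end LayeredBisim

theorem satS_iff_of_globallyKBisim (h : ∀ k, GloballyKBisim A C SU SB k) {ψ : Fml U B}
    (hψ : IsGF2Sentence SU SB ψ) : SatS A ψ ↔ SatS C ψ :=
  (layeredBisim_kBisim h).satS_iff hψ.1 hψ.2.1 (Set.subset_univ _) hψ.2.2.1 hψ.2.2.2

end Invariance

/-! ### Forests of walks -/

/-- A graph of vertices with prescribed unary predicates and loops, whose edges carry a pair of
sets of binary predicates: those holding along the edge and those holding against it. Its walks
form a forest structure. -/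
structure Blueprint (U B : Type) where
  Vertex : Type
  nonempty : Nonempty Vertex
  u : U → Vertex → Prop
  loop : B → Vertex → Prop
  edge : Vertex → Set B × Set B → Vertex → Prop
  edge_nonempty : ∀ {v κ w}, edge v κ w → κ.1.Nonempty ∨ κ.2.Nonempty
  edge_symm : ∀ {v κ w}, edge v κ w → edge w κ.swap v

namespace Blueprint

variable {X : Blueprint U B}

/-- A walk in the blueprint: its last vertex and the reversed list of the earlier vertices, each
with the label of the edge taken from it. The list need not follow edges of the blueprint; a node
whose last step does not follow an edge is a further root, with the same subtree. -/
@[ext]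
structure Node (X : Blueprint U B) where
  tip : X.Vertex
  past : List ((Set B × Set B) × X.Vertex)

/-- The walk `q` extends `p` by one edge, labelled `κ`. -/
def Step (κ : Set B × Set B) (p q : X.Node) : Prop :=
  q.past = (κ, p.tip) :: p.past ∧ X.edge p.tip κ q.tip

/-- One of the walks `p` and `q` extends the other by one edge, whose label read from `p` to `q`
is `κ`. -/
def Joined (κ : Set B × Set B) (p q : X.Node) : Prop :=
  Step κ p q ∨ Step κ.swap q p

theorem Step.length_lt {κ : Set B × Set B} {p q : X.Node} (h : Step κ p q) :
    p.past.length < q.past.length := by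
  simp [h.1]

theorem Step.unique {κ κ' : Set B × Set B} {p p' q : X.Node} (h : Step κ p q)
    (h' : Step κ' p' q) : κ = κ' ∧ p = p' := by
  have heq := h.1.symm.trans h'.1
  simp only [List.cons.injEq, Prod.mk.injEq] at heq
  exact ⟨heq.1.1, Node.ext heq.1.2 heq.2⟩

theorem Joined.symm {κ : Set B × Set B} {p q : X.Node} (h : Joined κ p q) : Joined κ.swap q p :=
  Or.symm h

theorem Joined.ne {κ : Set B × Set B} {p q : X.Node} (h : Joined κ p q) : p ≠ q := by
  rintro rfl
  exact h.elim (fun h => h.length_lt.false) fun h => h.length_lt.false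

theorem Joined.edge {κ : Set B × Set B} {p q : X.Node} (h : Joined κ p q) :
    X.edge p.tip κ q.tip :=
  h.elim (fun h => h.2) fun h => X.edge_symm h.2

theorem Joined.unique {κ κ' : Set B × Set B} {p q : X.Node} (h : Joined κ p q)
    (h' : Joined κ' p q) : κ = κ' := by
  rcases h with h | h <;> rcases h' with h' | h'
  · exact (h.unique h').1
  · exact (h.length_lt.asymm h'.length_lt).elim
  · exact (h.length_lt.asymm h'.length_lt).elim
  · exact Prod.swap_injective (h.unique h').1

/-- The interpretation of binary predicates on walks. -/
def nodeRel (R : B) (p q : X.Node) : Prop :=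
  p = q ∧ X.loop R p.tip ∨ ∃ κ, Joined κ p q ∧ R ∈ κ.1

theorem nodeRel_self {R : B} {p : X.Node} : nodeRel R p p ↔ X.loop R p.tip :=
  ⟨fun h => h.elim And.right fun ⟨_, h, _⟩ => (h.ne rfl).elim, fun h => .inl ⟨rfl, h⟩⟩

theorem Joined.nodeRel_iff {κ : Set B × Set B} {p q : X.Node} (h : Joined κ p q) {R : B} :
    nodeRel R p q ↔ R ∈ κ.1 :=
  ⟨fun hR => hR.elim (fun ⟨heq, _⟩ => (h.ne heq).elim) fun ⟨_, h', hR⟩ => h.unique h' ▸ hR,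
    fun hR => .inr ⟨κ, h, hR⟩⟩

theorem exists_joined_iff {p q : X.Node} :
    (∃ κ, Joined κ p q) ↔ p ≠ q ∧ ∃ R, nodeRel R p q ∨ nodeRel R q p := by
  constructor
  · rintro ⟨κ, h⟩
    refine ⟨h.ne, ?_⟩
    simp only [h.nodeRel_iff, h.symm.nodeRel_iff, exists_or]
    exact X.edge_nonempty h.edge
  · rintro ⟨hne, R, (⟨heq, -⟩ | ⟨κ, h, -⟩) | (⟨heq, -⟩ | ⟨κ, h, -⟩)⟩
    exacts [(hne heq).elim, ⟨κ, h⟩, (hne heq.symm).elim, ⟨_, h.symm⟩]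

/-- The forest structure of walks in the blueprint. -/
def forest (X : Blueprint U B) : Forest U B where
  Dom := X.Node
  nonempty := X.nonempty.map fun v => ⟨v, []⟩
  u P p := X.u P p.tip
  b := nodeRel
  parent p q := ∃ κ, Step κ p q
  parent_unique := fun ⟨_, h⟩ ⟨_, h'⟩ => (h.unique h').2
  parent_wf := (InvImage.wf (fun p : X.Node => p.past.length) wellFounded_lt).mono
    fun _ _ ⟨_, h⟩ => h.length_lt
  adj_iff p q := by
    rw [← exists_joined_iff]
    constructor
    · rintro ⟨κ, h | h⟩
      exacts [.inl ⟨κ, h⟩, .inr ⟨κ.swap, h⟩]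
    · rintro (⟨κ, h⟩ | ⟨κ, h⟩)
      exacts [⟨κ, .inl h⟩, ⟨κ.swap, .inr h⟩]

theorem finiteOutdeg_forest
    (h : ∀ v, {z : (Set B × Set B) × X.Vertex | X.edge v z.1 z.2}.Finite) :
    FiniteOutdeg X.forest.toStr := by
  intro p
  have hparent : {q | X.forest.parent q p}.Finite :=
    Set.Subsingleton.finite fun _ hq _ hq' => X.forest.parent_unique hq hq'
  have hchild : {q | X.forest.parent p q}.Finite := by
    refine ((h p.tip).image fun z => (⟨z.2, (z.1, p.tip) :: p.past⟩ : X.Node)).subset ?_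
    rintro q ⟨κ, hpast, hedge⟩
    exact ⟨(κ, q.tip), hedge, Node.ext rfl hpast.symm⟩
  refine (hchild.union hparent).subset ?_
  rintro q ⟨hne, hR⟩
  exact (X.forest.adj_iff p q).1 ⟨hne.symm, hR⟩

/-- The walk `p` continued backwards by `l`. -/
def Node.shift (l : List ((Set B × Set B) × X.Vertex)) (p : X.Node) : X.Node :=
  ⟨p.tip, p.past ++ l⟩

theorem Node.shift_injective (l : List ((Set B × Set B) × X.Vertex)) :
    Function.Injective (Node.shift l) := fun p q h => by
  simpa [Node.shift, Node.ext_iff] using h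

theorem step_shift_iff {κ : Set B × Set B} {l : List ((Set B × Set B) × X.Vertex)}
    {p q : X.Node} : Step κ (p.shift l) (q.shift l) ↔ Step κ p q := by
  simp only [Step, Node.shift, ← List.cons_append, List.append_cancel_right_eq]

theorem nodeRel_shift_iff {R : B} {l : List ((Set B × Set B) × X.Vertex)} {p q : X.Node} :
    nodeRel R (p.shift l) (q.shift l) ↔ nodeRel R p q := by
  simp only [nodeRel, Joined, step_shift_iff, (Node.shift_injective l).eq_iff]
  rfl

theorem mem_desc_iff_exists_shift {p q : X.Node} :
    q ∈ X.forest.desc p ↔ ∃ r ∈ X.forest.desc (⟨p.tip, []⟩ : X.Node), r.shift p.past = q := by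
  constructor
  · intro h
    induction h with
    | refl => exact ⟨⟨p.tip, []⟩, .refl, rfl⟩
    | tail _ hstep ih =>
      obtain ⟨r, hr, rfl⟩ := ih
      obtain ⟨κ, hpast, hedge⟩ := hstep
      exact ⟨⟨_, (κ, r.tip) :: r.past⟩, hr.tail ⟨κ, rfl, hedge⟩, Node.ext rfl hpast.symm⟩
  · rintro ⟨r, hr, rfl⟩
    exact hr.lift (Node.shift p.past) fun _ _ ⟨κ, hstep⟩ => ⟨κ, step_shift_iff.2 hstep⟩

theorem subtreeIso_root (p : X.Node) :
    X.forest.SubtreeIso (⟨p.tip, []⟩ : X.Node) p := by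
  let f (c : X.forest.desc (⟨p.tip, []⟩ : X.Node)) : X.forest.desc p :=
    ⟨Node.shift p.past c.1, mem_desc_iff_exists_shift.2 ⟨c.1, c.2, rfl⟩⟩
  have hf : Function.Bijective f := by
    refine ⟨fun c d h => Subtype.ext (Node.shift_injective _ (Subtype.ext_iff.1 h)), ?_⟩
    rintro ⟨q, hq⟩
    obtain ⟨r, hr, heq⟩ := mem_desc_iff_exists_shift.1 hq
    exact ⟨⟨r, hr⟩, Subtype.ext heq⟩
  exact ⟨Equiv.ofBijective f hf, rfl, fun _ _ => exists_congr fun _ => step_shift_iff.symm,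
    fun _ _ => Iff.rfl, fun _ _ _ => nodeRel_shift_iff.symm⟩

theorem regular_forest [Finite X.Vertex] : X.forest.Regular :=
  ⟨Set.range fun v : X.Vertex => (⟨v, []⟩ : X.Node), Set.finite_range _,
    fun p => ⟨_, ⟨p.tip, rfl⟩, subtreeIso_root p⟩⟩

end Blueprint

/-! ### Unravelling a quotient of a structure -/

section Quotient

variable {M : Str U B} {SU : Set U} {SB : Set B} {V : Type} {f : M.Dom → V}

/-- The binary predicates of `SB` holding from `a` to `a'`, and those holding from `a'` to `a`. -/
def edgeLabel (M : Str U B) (SB : Set B) (a a' : M.Dom) : Set B × Set B :=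
  ({R ∈ SB | M.b R a a'}, {R ∈ SB | M.b R a' a})

/-- The blueprint obtained from the `(SU, SB)`-reduct of `M` by identifying elements along `f`. -/
def quotientBlueprint (M : Str U B) (SU : Set U) (SB : Set B) (f : M.Dom → V) :
    Blueprint U B where
  Vertex := Set.range f
  nonempty := M.nonempty.map (Set.rangeFactorization f)
  u P t := ∃ a, f a = t ∧ P ∈ SU ∧ M.u P a
  loop R t := ∃ a, f a = t ∧ R ∈ SB ∧ M.b R a a
  edge t κ t' := ∃ a a', f a = t ∧ f a' = t' ∧ a' ≠ a ∧ Guarded2 M SB a a' ∧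
    κ = edgeLabel M SB a a'
  edge_nonempty := by
    rintro _ _ _ ⟨a, a', -, -, -, ⟨R, hR, hb⟩, rfl⟩
    exact hb.imp (fun hb => ⟨R, hR, hb⟩) fun hb => ⟨R, hR, hb⟩
  edge_symm := by
    rintro _ _ _ ⟨a, a', ha, ha', hne, ⟨R, hR, hb⟩, rfl⟩
    exact ⟨a', a, ha', ha, hne.symm, ⟨R, hR, hb.symm⟩, rfl⟩

/-- The forest of walks in the quotient of `M` along `f`. -/
def quotientForest (M : Str U B) (SU : Set U) (SB : Set B) (f : M.Dom → V) : Forest U B :=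
  (quotientBlueprint M SU SB f).forest

/-- The node `p` of the forest lies over the element `a`. -/
def Over (f : M.Dom → V) (a : M.Dom) (p : (quotientForest M SU SB f).Dom) : Prop :=
  f a = (Blueprint.Node.tip p).1

theorem exists_over (a : M.Dom) : ∃ p : (quotientForest M SU SB f).Dom, Over f a p :=
  ⟨(⟨⟨f a, a, rfl⟩, []⟩ : (quotientBlueprint M SU SB f).Node), rfl⟩

theorem exists_over_of_node (p : (quotientForest M SU SB f).Dom) : ∃ a, Over f a p :=
  (Blueprint.Node.tip p).2

theorem Over.atp1_eq (hf : ∀ a a', f a = f a' → atp1 M SU SB a = atp1 M SU SB a') {a : M.Dom}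
    {p : (quotientForest M SU SB f).Dom} (h : Over f a p) :
    atp1 M SU SB a = atp1 (quotientForest M SU SB f).toStr SU SB p := by
  have hf' a' (h' : f a' = (Blueprint.Node.tip p).1) := atp1_eq_iff.1 (hf a a' (h.trans h'.symm))
  refine atp1_eq_iff.2 ⟨fun P hP => ?_, fun R hR => .trans ?_ Blueprint.nodeRel_self.symm⟩
  · exact ⟨fun ha => ⟨a, h, hP, ha⟩, fun ⟨a', h', _, ha'⟩ => ((hf' a' h').1 P hP).2 ha'⟩
  · exact ⟨fun ha => ⟨a, h, hR, ha⟩, fun ⟨a', h', _, ha'⟩ => ((hf' a' h').2 R hR).2 ha'⟩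

theorem atp2_eq_of_joined (hf : ∀ a a', f a = f a' → atp1 M SU SB a = atp1 M SU SB a')
    {a a' : M.Dom} {p q : (quotientForest M SU SB f).Dom} (h : Over f a p) (h' : Over f a' q)
    (hj : Blueprint.Joined (edgeLabel M SB a a') p q) :
    atp2 M SU SB a a' = atp2 (quotientForest M SU SB f).toStr SU SB p q :=
  atp2_eq_iff.2 ⟨h.atp1_eq hf, h'.atp1_eq hf, fun _ hR =>
    ⟨⟨fun hb => hj.nodeRel_iff.2 ⟨hR, hb⟩, fun hb => (hj.nodeRel_iff.1 hb).2⟩,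
      ⟨fun hb => hj.symm.nodeRel_iff.2 ⟨hR, hb⟩, fun hb => (hj.symm.nodeRel_iff.1 hb).2⟩⟩⟩

theorem Over.forth (hf : ∀ a a', f a = f a' → atp1 M SU SB a = atp1 M SU SB a') {a a' : M.Dom}
    {p : (quotientForest M SU SB f).Dom} (h : Over f a p) (hne : a' ≠ a)
    (hg : Guarded2 M SB a a') :
    ∃ q, q ≠ p ∧ atp2 M SU SB a a' = atp2 (quotientForest M SU SB f).toStr SU SB p q ∧
      Over f a' q := by
  let q : (quotientBlueprint M SU SB f).Node :=
    ⟨⟨f a', a', rfl⟩, (edgeLabel M SB a a', Blueprint.Node.tip p) :: Blueprint.Node.past p⟩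
  have hj : Blueprint.Joined (edgeLabel M SB a a') p q :=
    .inl ⟨rfl, a, a', h, rfl, hne, hg, rfl⟩
  exact ⟨q, hj.ne.symm, atp2_eq_of_joined hf h rfl hj, rfl⟩

theorem exists_over_of_guarded2 (hf : ∀ a a', f a = f a' → atp1 M SU SB a = atp1 M SU SB a')
    {p q : (quotientForest M SU SB f).Dom} (hne : q ≠ p)
    (hg : Guarded2 (quotientForest M SU SB f).toStr SB p q) :
    ∃ a a', Over f a p ∧ Over f a' q ∧ a' ≠ a ∧
      atp2 M SU SB a a' = atp2 (quotientForest M SU SB f).toStr SU SB p q := by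
  obtain ⟨R, -, hR⟩ := hg
  obtain ⟨κ, hj⟩ := Blueprint.exists_joined_iff.2 ⟨hne.symm, R, hR⟩
  obtain ⟨a, a', ha, ha', hne', -, rfl⟩ := hj.edge
  exact ⟨a, a', ha, ha', hne', atp2_eq_of_joined hf ha ha' hj⟩

theorem isBisim_over (hf : Function.Injective f) :
    IsBisim M (quotientForest M SU SB f).toStr SU SB (Over f) := by
  have hf' a a' (h : f a = f a') : atp1 M SU SB a = atp1 M SU SB a' := by rw [hf h]
  refine ⟨fun h => h.atp1_eq hf', fun h a' => h.forth hf', fun {a p} h q hne hg => ?_⟩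
  obtain ⟨a₀, a', h₀, h', hne', hatp⟩ := exists_over_of_guarded2 hf' hne hg
  obtain rfl : a = a₀ := hf (h.trans h₀.symm)
  exact ⟨a', hne', hatp, h'⟩

theorem layeredBisim_over {S : Set (Fml U B)}
    (hf : ∀ a a', f a = f a' → atp1 M SU SB a = atp1 M SU SB a')
    (hS : ∀ a a', f a = f a' → localType S M a = localType S M a') :
    LayeredBisim M (quotientForest M SU SB f).toStr SU SB S fun _ => Over f where
  of_succ h := h
  atp1_eq h := h.atp1_eq hf
  left_total _ := exists_over
  right_total _ := exists_over_of_node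
  forth h _ hne hg :=
    let ⟨q, hne', hatp, h'⟩ := h.forth hf hne hg
    ⟨_, q, rfl, h, hne', hatp, h'⟩
  back h _ hne hg :=
    let ⟨a₀, a', h₀, h', hne', hatp⟩ := exists_over_of_guarded2 hf hne hg
    ⟨a₀, a', hS _ _ (h.trans h₀.symm), h₀, hne', hatp, h'⟩

theorem finiteOutdeg_quotientForest (hSB : SB.Finite) (hf : (Set.range f).Finite) :
    FiniteOutdeg (quotientForest M SU SB f).toStr := by
  have : Finite (quotientBlueprint M SU SB f).Vertex := hf
  refine Blueprint.finiteOutdeg_forest fun _ =>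
    ((hSB.finite_subsets.prod hSB.finite_subsets).prod Set.finite_univ).subset ?_
  rintro ⟨_, _⟩ ⟨a, a', -, -, -, -, rfl⟩
  exact ⟨⟨Set.sep_subset _ _, Set.sep_subset _ _⟩, trivial⟩

theorem regular_quotientForest (hf : (Set.range f).Finite) :
    (quotientForest M SU SB f).Regular :=
  have : Finite (quotientBlueprint M SU SB f).Vertex := hf
  Blueprint.regular_forest

end Quotient

theorem exists_forest_bisim (M : Str U B) :
    ∃ G : Forest U B, (∀ a, ∃ c, Bisim M G.toStr Set.univ Set.univ a c) ∧
      ∀ c, ∃ a, Bisim M G.toStr Set.univ Set.univ a c :=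
  ⟨quotientForest M Set.univ Set.univ id,
    fun a => (exists_over a).imp fun _ h => ⟨_, isBisim_over Function.injective_id, h⟩,
    fun c => (exists_over_of_node c).imp fun _ h => ⟨_, isBisim_over Function.injective_id, h⟩⟩

theorem atp1_eq_of_localType_Subf_eq {A C : Str U B} {θ : Fml U B} {a : A.Dom} {c : C.Dom}
    (h : localType θ.Subf A a = localType θ.Subf C c) :
    atp1 A θ.upreds θ.bpreds a = atp1 C θ.upreds θ.bpreds c := by
  have hsat := localType_eq_iff.1 h
  refine atp1_eq_iff.2 ⟨fun P hP => ?_, fun R hR => ?_⟩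
  · obtain ⟨v, hv⟩ := Fml.exists_uatom_mem_Subf hP
    exact hsat _ hv
  · obtain ⟨v, w, hvw⟩ := Fml.exists_batom_mem_Subf hR
    exact hsat _ hvw

theorem exists_regular_forest_model {M : Str U B} {θ : Fml U B} (hθ : IsGF2 θ)
    (hs : θ.IsSentence) (hM : SatS M θ) :
    ∃ F : Forest U B, SatS F.toStr θ ∧ F.Regular ∧ FiniteOutdeg F.toStr := by
  have hfin := finite_range_localType θ.finite_Subf M
  have hover := layeredBisim_over (M := M) (f := localType θ.Subf M) (S := θ.Subf)
    (fun _ _ => atp1_eq_of_localType_Subf_eq) fun _ _ h => h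
  exact ⟨_, (hover.satS_iff hθ hs subset_rfl subset_rfl subset_rfl).1 hM,
    regular_quotientForest hfin, finiteOutdeg_quotientForest θ.finite_bpreds hfin⟩

theorem gf2Entails_of_forall_regular_forest {φ₁ φ₂ : Fml U B} {SU : Set U} {SB : Set B}
    (h1 : IsGF2 φ₁) (h1s : φ₁.IsSentence)
    (H : ∀ F : Forest U B, SatS F.toStr φ₁ → F.Regular → FiniteOutdeg F.toStr →
      ∃ G : Str U B, SatS G φ₂ ∧ ∀ k, GloballyKBisim F.toStr G SU SB k) :
    GF2Entails SU SB φ₁ φ₂ := by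
  intro ψ hψ hφ₂ψ A hA
  by_contra hAψ
  have hθ : SatS A (.conj φ₁ (.neg ψ)) := fun σ => ⟨hA σ, (hψ.2.1.sat_iff_satS σ).not.2 hAψ⟩
  have hθs : (Fml.conj φ₁ (.neg ψ)).IsSentence := Set.union_empty_iff.2 ⟨h1s, hψ.2.1⟩
  obtain ⟨F, hF, hreg, hfin⟩ := exists_regular_forest_model (.conj h1 (.neg hψ.1)) hθs hθ
  obtain ⟨G, hG, hFG⟩ := H F (fun σ => (hF σ).1) hreg hfin
  have hFψ : SatS F.toStr ψ := (satS_iff_of_globallyKBisim hFG hψ).2 (hφ₂ψ G hG)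
  obtain ⟨c⟩ := F.nonempty
  exact (hF fun _ => c).2 (hFψ _)

/-! ### Finite tests for bounded bisimilarity -/

section FiniteTests

variable {SU : Set U} {SB : Set B} {V : Set Var} {S : Set (Fml U B)} {χ : Fml U B} {v w : Var}

/-- A GF²-formula over the signature `(SU, SB)` with free variables in `V`. -/
structure IsGF2Formula (SU : Set U) (SB : Set B) (V : Set Var) (χ : Fml U B) : Prop where
  isGF2 : IsGF2 χ
  free_subset : χ.free ⊆ V
  upreds_subset : χ.upreds ⊆ SU
  bpreds_subset : χ.bpreds ⊆ SB

namespace IsGF2Formula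

theorem mono {W : Set Var} (h : IsGF2Formula SU SB V χ) (hV : V ⊆ W) : IsGF2Formula SU SB W χ :=
  ⟨h.isGF2, h.free_subset.trans hV, h.upreds_subset, h.bpreds_subset⟩

theorem isGF2Sentence (h : IsGF2Formula SU SB ∅ χ) : IsGF2Sentence SU SB χ :=
  ⟨h.isGF2, Set.subset_empty_iff.1 h.free_subset, h.upreds_subset, h.bpreds_subset⟩

theorem of_mem_sigAtoms (h : χ ∈ sigAtoms SU SB V) : IsGF2Formula SU SB V χ := by
  refine ⟨?_, h.2.1, h.2.2.1, h.2.2.2⟩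
  cases χ with
  | uatom P v => exact .uatom P v
  | batom R v w => exact .batom R v w
  | eqv v w => exact .eqv v w
  | _ => exact h.1.elim

theorem neg (h : IsGF2Formula SU SB V χ) : IsGF2Formula SU SB V (.neg χ) :=
  ⟨.neg h.isGF2, h.free_subset, h.upreds_subset, h.bpreds_subset⟩

theorem conj {ψ : Fml U B} (h : IsGF2Formula SU SB V χ) (h' : IsGF2Formula SU SB V ψ) :
    IsGF2Formula SU SB V (.conj χ ψ) :=
  ⟨.conj h.isGF2 h'.isGF2, Set.union_subset h.free_subset h'.free_subset,
    Set.union_subset h.upreds_subset h'.upreds_subset,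
    Set.union_subset h.bpreds_subset h'.bpreds_subset⟩

theorem ex_guarded {α : Fml U B} (hα : α ∈ sigAtoms SU SB V) (hfree : α.free = V) (hw : w ∈ V)
    (h : IsGF2Formula SU SB V χ) : IsGF2Formula SU SB (V \ {w}) (.ex w (.conj α χ)) := by
  have hαχ := (of_mem_sigAtoms hα).conj h
  refine ⟨.exG hα.1 h.isGF2 ?_, Set.sdiff_subset_sdiff_left hαχ.free_subset, hαχ.upreds_subset,
    hαχ.bpreds_subset⟩
  rw [hfree]
  exact Set.union_subset h.free_subset (Set.singleton_subset_iff.2 hw)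

theorem sat_upd_iff (h : IsGF2Formula SU SB {w} χ) {A : Str U B} {σ : Var → A.Dom} {d : A.Dom} :
    Sat A χ (upd σ w d) ↔ Sat A χ fun _ => d :=
  sat_congr fun _ hu => h.free_subset hu ▸ upd_self σ w d

end IsGF2Formula

theorem exists_typeFormula (hS : S.Finite) (hgf : ∀ ψ ∈ S, IsGF2Formula SU SB V ψ)
    (t : Set (Fml U B)) :
    ∃ χ, IsGF2Formula SU SB V χ ∧
      ∀ (A : Str U B) σ, Sat A χ σ ↔ ∀ ψ ∈ S, (ψ ∈ t ↔ Sat A ψ σ) := by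
  induction S, hS using Set.Finite.induction_on with
  | empty =>
    exact ⟨.neg .fls, ⟨.neg .fls, Set.empty_subset _, Set.empty_subset _, Set.empty_subset _⟩,
      by simp [Sat]⟩
  | @insert ψ S _ _ ih =>
    rw [Set.forall_mem_insert] at hgf
    obtain ⟨χ, hχ, hsat⟩ := ih hgf.2
    by_cases hψ : ψ ∈ t
    · exact ⟨.conj ψ χ, hgf.1.conj hχ, by simp [Sat, hsat, hψ]⟩
    · exact ⟨.conj (.neg ψ) χ, hgf.1.neg.conj hχ, by simp [Sat, hsat, hψ]⟩

theorem exists_finite_successor_test (hSU : SU.Finite) (hSB : SB.Finite) (hvw : v ≠ w)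
    (hS : S.Finite) (hgf : ∀ χ ∈ S, IsGF2Formula SU SB Set.univ χ) :
    ∃ T : Set (Fml U B), T.Finite ∧ (∀ χ ∈ T, IsGF2Formula SU SB {v} χ) ∧
      ∀ (A C : Str U B) a c, localType T A a = localType T C c →
        ∀ a', a' ≠ a → Guarded2 A SB a a' →
          ∃ c', ∀ χ ∈ S, (Sat A χ (upd (fun _ => a) w a') ↔ Sat C χ (upd (fun _ => c) w c')) := by
  choose typeFml htype hsat using fun t => exists_typeFormula hS hgf t
  let guards := {α ∈ sigAtoms SU SB Set.univ | α.free = Set.univ}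
  have hguards : guards.Finite := (finite_sigAtoms hSU hSB _).subset (Set.sep_subset _ _)
  have huniv : (Set.univ \ {w} : Set Var) = {v} := by
    ext u
    rcases Var.eq_or_eq_of_ne hvw u with rfl | rfl <;> simp [hvw, hvw.symm]
  refine ⟨Set.image2 (fun α t => .ex w (.conj α (typeFml t))) guards {t | t ⊆ S},
    hguards.image2 _ hS.finite_subsets, ?_, fun A C a c hac a' hne hg => ?_⟩
  · rintro _ ⟨α, ⟨hα, hfree⟩, t, -, rfl⟩
    exact huniv ▸ (htype t).ex_guarded hα hfree trivial
  · let σ := upd (fun _ => a) w a'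
    have hσv : σ v = a := upd_of_ne _ hvw _
    have hσw : σ w = a' := upd_self _ _ _
    obtain ⟨α, hα, hfree, hsatα⟩ := (guarded2_iff_exists_sat_atom SU hvw
      (hσv.trans_ne (hne.symm.trans_eq hσw.symm))).1 (hσv.symm ▸ hσw.symm ▸ hg)
    let t := {χ ∈ S | Sat A χ σ}
    have hmemt χ (hχ : χ ∈ S) : χ ∈ t ↔ Sat A χ σ := and_iff_right hχ
    obtain ⟨c', -, hc'⟩ := (localType_eq_iff.1 hac _
      ⟨α, ⟨hα, hfree⟩, t, Set.sep_subset _ _, rfl⟩).1 ⟨a', hsatα, (hsat t A σ).2 hmemt⟩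
    exact ⟨c', fun χ hχ => (hmemt χ hχ).symm.trans ((hsat t C _).1 hc' χ hχ)⟩

theorem exists_finite_forth_test (hSU : SU.Finite) (hSB : SB.Finite) (hvw : v ≠ w)
    (hS : S.Finite) (hgf : ∀ χ ∈ S, IsGF2Formula SU SB {w} χ) :
    ∃ T : Set (Fml U B), T.Finite ∧ (∀ χ ∈ T, IsGF2Formula SU SB {v} χ) ∧
      ∀ (A C : Str U B) a c, localType T A a = localType T C c →
        ∀ a', a' ≠ a → Guarded2 A SB a a' →
          ∃ c', c' ≠ c ∧ atp2 A SU SB a a' = atp2 C SU SB c c' ∧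
            localType S A a' = localType S C c' := by
  obtain ⟨T, hT, hTgf, hforth⟩ := exists_finite_successor_test hSU hSB hvw
    ((finite_sigAtoms hSU hSB Set.univ).union hS) (Set.union_subset
      (fun _ => IsGF2Formula.of_mem_sigAtoms) fun χ hχ => (hgf χ hχ).mono (Set.subset_univ _))
  refine ⟨T, hT, hTgf, fun A C a c hac a' hne hg => ?_⟩
  obtain ⟨c', hc'⟩ := hforth A C a c hac a' hne hg
  obtain ⟨hatp, heq⟩ := (sameAtoms_univ_iff hvw).1 fun α hα => hc' α (.inl hα)
  simp only [upd_self, upd_of_ne _ hvw] at hatp heq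
  refine ⟨c', fun h => hne (heq.2 h.symm).symm, hatp, localType_eq_iff.2 fun χ hχ => ?_⟩
  rw [← (hgf χ hχ).sat_upd_iff, ← (hgf χ hχ).sat_upd_iff, hc' χ (.inr hχ)]

theorem exists_finite_kBisim_test (hSU : SU.Finite) (hSB : SB.Finite) (k : ℕ) (v : Var) :
    ∃ S : Set (Fml U B), S.Finite ∧ (∀ χ ∈ S, IsGF2Formula SU SB {v} χ) ∧
      ∀ (A C : Str U B) a c, localType S A a = localType S C c → KBisim A C SU SB k a c := by
  have atp1_eq {A C : Str U B} {v : Var} {a : A.Dom} {c : C.Dom}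
      (h : SameAtoms A C SU SB {v} (fun _ => a) fun _ => c) := sameAtoms_singleton_iff.1 h
  induction k generalizing v with
  | zero =>
    exact ⟨sigAtoms SU SB {v}, finite_sigAtoms hSU hSB _,
      fun _ => IsGF2Formula.of_mem_sigAtoms, fun A C a c h => atp1_eq (localType_eq_iff.1 h)⟩
  | succ k ih =>
    obtain ⟨w, hvw⟩ := v.exists_ne
    obtain ⟨S, hS, hSgf, hSk⟩ := ih w
    obtain ⟨T, hT, hTgf, hforth⟩ := exists_finite_forth_test hSU hSB hvw hS hSgf
    refine ⟨sigAtoms SU SB {v} ∪ T, (finite_sigAtoms hSU hSB _).union hT,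
      Set.union_subset (fun _ => IsGF2Formula.of_mem_sigAtoms) hTgf, fun A C a c h => ?_⟩
    have hsat := localType_eq_iff.1 h
    have hac : localType T A a = localType T C c :=
      localType_eq_iff.2 fun χ hχ => hsat χ (.inr hχ)
    refine ⟨atp1_eq fun α hα => hsat α (.inl hα), fun a' hne hg => ?_, fun c' hne hg => ?_⟩
    · obtain ⟨c', hne', hatp, hSeq⟩ := hforth A C a c hac a' hne hg
      exact ⟨c', hne', hatp, hSk A C a' c' hSeq⟩
    · obtain ⟨a', hne', hatp, hSeq⟩ := hforth C A c a hac.symm c' hne hg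
      exact ⟨a', hne', hatp.symm, hSk A C a' c' hSeq.symm⟩

theorem exists_finite_globallyKBisim_test (hSU : SU.Finite) (hSB : SB.Finite) (k : ℕ) :
    ∃ T : Set (Fml U B), T.Finite ∧ (∀ ψ ∈ T, IsGF2Formula SU SB ∅ ψ) ∧
      ∀ A C : Str U B, (∀ ψ ∈ T, (SatS A ψ ↔ SatS C ψ)) → GloballyKBisim A C SU SB k := by
  obtain ⟨S, hS, hSgf, hSk⟩ := exists_finite_kBisim_test hSU hSB k .x
  choose typeFml htype hsat using fun t => exists_typeFormula hS hSgf t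
  let realized (t : Set (Fml U B)) : Fml U B := .ex .x (.conj (.eqv .x .x) (typeFml t))
  have hrealized t : IsGF2Formula SU SB ∅ (realized t) := by
    rw [← Set.sdiff_self (s := {Var.x})]
    exact (htype t).ex_guarded ⟨trivial, by simp [Fml.free], Set.empty_subset _,
      Set.empty_subset _⟩ (by simp [Fml.free]) rfl
  have satS_realized (A C : Str U B) (a : A.Dom) :
      SatS C (realized (localType S A a)) ↔ ∃ c, localType S A a = localType S C c := by
    obtain ⟨c₀⟩ := C.nonempty
    rw [← (hrealized _).isGF2Sentence.2.1.sat_iff_satS fun _ => c₀]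
    refine exists_congr fun c => (and_iff_right rfl).trans ?_
    rw [hsat, localType_eq_iff]
    refine forall₂_congr fun χ hχ => ?_
    rw [(hSgf χ hχ).sat_upd_iff]
    exact iff_congr (and_iff_right hχ) .rfl
  refine ⟨realized '' {t | t ⊆ S}, hS.finite_subsets.image _,
    Set.forall_mem_image.2 fun t _ => hrealized t, fun A C h => ?_⟩
  rw [Set.forall_mem_image] at h
  have hsub (A : Str U B) a : localType S A a ⊆ S := Set.sep_subset _ _
  refine ⟨fun a => ?_, fun c => ?_⟩
  · obtain ⟨c, hc⟩ := (satS_realized A C a).1 ((h (hsub A a)).1 ((satS_realized A A a).2 ⟨a, rfl⟩))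
    exact ⟨c, hSk A C a c hc⟩
  · obtain ⟨a, ha⟩ := (satS_realized C A c).1 ((h (hsub C c)).2 ((satS_realized C C c).2 ⟨c, rfl⟩))
    exact ⟨a, hSk A C a c ha.symm⟩

theorem GF2Entails.exists_model_agreeing {φ₁ φ₂ : Fml U B} {T : Set (Fml U B)}
    (H : GF2Entails SU SB φ₁ φ₂) {F : Str U B} (hF : SatS F φ₁) (hT : T.Finite)
    (hgf : ∀ ψ ∈ T, IsGF2Formula SU SB ∅ ψ) :
    ∃ G : Str U B, SatS G φ₂ ∧ ∀ ψ ∈ T, (SatS F ψ ↔ SatS G ψ) := by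
  obtain ⟨χ, hχ, hsat⟩ := exists_typeFormula hT hgf {ψ | SatS F ψ}
  have sat_iff (A : Str U B) (σ) : Sat A χ σ ↔ ∀ ψ ∈ T, (SatS F ψ ↔ SatS A ψ) :=
    (hsat A σ).trans <| forall₂_congr fun ψ hψ => by
      rw [(hgf ψ hψ).isGF2Sentence.2.1.sat_iff_satS, Set.mem_ofPred_eq]
  by_contra hG
  have hφ₂χ : Entails φ₂ (.neg χ) := fun G hGφ₂ σ hσ =>
    hG ⟨G, hGφ₂, (sat_iff G σ).1 hσ⟩
  obtain ⟨a⟩ := F.nonempty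
  exact H _ hχ.neg.isGF2Sentence hφ₂χ F hF (fun _ => a) ((sat_iff F _).2 fun _ _ => .rfl)

theorem GF2Entails.exists_globallyKBisim {φ₁ φ₂ : Fml U B} (H : GF2Entails SU SB φ₁ φ₂)
    (hSU : SU.Finite) (hSB : SB.Finite) {F : Str U B} (hF : SatS F φ₁) (k : ℕ) :
    ∃ G : Str U B, SatS G φ₂ ∧ GloballyKBisim F G SU SB k := by
  obtain ⟨T, hT, hgf, htest⟩ := exists_finite_globallyKBisim_test hSU hSB k
  obtain ⟨G, hG, hFG⟩ := H.exists_model_agreeing hF hT hgf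
  exact ⟨G, hG, htest F G hFG⟩

end FiniteTests

/-! ### Ultraproducts -/

section Ultraproducts

open Filter

variable {ι : Type} {u : Ultrafilter ι} {G : ι → Str U B}

/-- The ultraproduct of the structures `G i`, its predicates being evaluated at the representatives
chosen by `Quotient.out`. -/
def ultraproduct (u : Ultrafilter ι) (G : ι → Str U B) : Str U B where
  Dom := (u : Filter ι).Product fun i => (G i).Dom
  nonempty := ⟨((fun i => (G i).nonempty.some : ∀ i, (G i).Dom) : (u : Filter ι).Product _)⟩
  u P q := ∀ᶠ i in u, (G i).u P (Quotient.out q i)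
  b R p q := ∀ᶠ i in u, (G i).b R (Quotient.out p i) (Quotient.out q i)

/-- A family of elements representing an element of an ultraproduct. -/
noncomputable def rep (q : (ultraproduct u G).Dom) (i : ι) : (G i).Dom :=
  Quotient.out q i

theorem eq_iff_eventually_rep_eq {p q : (ultraproduct u G).Dom} :
    p = q ↔ ∀ᶠ i in u, rep p i = rep q i :=
  Quotient.out_equiv_out.symm

theorem exists_eventually_rep_eq (p : ∀ i, (G i).Dom) :
    ∃ q : (ultraproduct u G).Dom, ∀ᶠ i in u, rep q i = p i :=
  ⟨Quotient.mk _ p, Quotient.mk_out (s := productSetoid (u : Filter ι) fun i => (G i).Dom) p⟩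

theorem exists_eventually_rep_iff {P : ∀ i, (G i).Dom → Prop} :
    (∃ q : (ultraproduct u G).Dom, ∀ᶠ i in u, P i (rep q i)) ↔ ∀ᶠ i in u, ∃ d, P i d := by
  refine ⟨fun ⟨q, hq⟩ => hq.mono fun i hi => ⟨_, hi⟩, fun h => ?_⟩
  have (i : ι) : Nonempty (G i).Dom := (G i).nonempty
  obtain ⟨q, hq⟩ := exists_eventually_rep_eq (u := u) fun i => Classical.epsilon (P i)
  refine ⟨q, ?_⟩
  filter_upwards [h, hq] with i hi hqi
  exact hqi ▸ Classical.epsilon_spec hi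

theorem sat_ultraproduct_iff {φ : Fml U B} {σ : Var → (ultraproduct u G).Dom} :
    Sat (ultraproduct u G) φ σ ↔ ∀ᶠ i in u, Sat (G i) φ fun v => rep (σ v) i := by
  have rep_upd (σ : Var → (ultraproduct u G).Dom) v d i :
      (fun w => rep (upd σ v d w) i) = upd (fun w => rep (σ w) i) v (rep d i) :=
    funext fun w => apply_ite (rep · i) (w = v) d (σ w)
  induction φ generalizing σ with
  | uatom P v => rfl
  | batom R v w => rfl
  | eqv v w => exact eq_iff_eventually_rep_eq
  | fls => exact eventually_const.symm
  | neg φ ih => exact (not_congr ih).trans Ultrafilter.eventually_not.symm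
  | conj φ ψ ihφ ihψ => exact (and_congr ihφ ihψ).trans eventually_and.symm
  | disj φ ψ ihφ ihψ => exact (or_congr ihφ ihψ).trans Ultrafilter.eventually_or.symm
  | impl φ ψ ihφ ihψ => exact (imp_congr ihφ ihψ).trans Ultrafilter.eventually_imp.symm
  | all v φ ih =>
    rw [← not_iff_not, ← Ultrafilter.eventually_not]
    simp only [Sat, not_forall, ih, ← Ultrafilter.eventually_not, rep_upd]
    exact exists_eventually_rep_iff
      (P := fun i d => ¬ Sat (G i) φ (upd (fun w => rep (σ w) i) v d))
  | ex v φ ih =>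
    simp only [Sat, ih, rep_upd]
    exact exists_eventually_rep_iff (P := fun i d => Sat (G i) φ (upd (fun w => rep (σ w) i) v d))

theorem satS_ultraproduct {φ : Fml U B} (h : ∀ i, SatS (G i) φ) : SatS (ultraproduct u G) φ :=
  fun _ => sat_ultraproduct_iff.2 (.of_forall fun i => h i _)

theorem eventually_forall_mem_sat_iff {S : Set (Fml U B)} (hS : S.Finite)
    (σ : Var → (ultraproduct u G).Dom) :
    ∀ᶠ i in u, ∀ χ ∈ S, (Sat (ultraproduct u G) χ σ ↔ Sat (G i) χ fun v => rep (σ v) i) := by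
  refine hS.eventually_all.2 fun χ _ => ?_
  by_cases hχ : Sat (ultraproduct u G) χ σ
  · exact (sat_ultraproduct_iff.1 hχ).mono fun i hi => iff_of_true hχ hi
  · refine (Ultrafilter.eventually_not.2 (mt sat_ultraproduct_iff.2 hχ)).mono fun i hi => ?_
    exact iff_of_false hχ hi

variable {SU : Set U} {SB : Set B}

theorem eventually_atp2_rep_eq (hSU : SU.Finite) (hSB : SB.Finite)
    (q q' : (ultraproduct u G).Dom) :
    ∀ᶠ i in u, atp2 (ultraproduct u G) SU SB q q' = atp2 (G i) SU SB (rep q i) (rep q' i) ∧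
      (q = q' ↔ rep q i = rep q' i) :=
  (eventually_forall_mem_sat_iff (finite_sigAtoms hSU hSB Set.univ) (vval q q')).mono fun _ hi =>
    (sameAtoms_univ_iff (v := .x) (w := .y) (by simp)).1 hi

theorem eventually_kBisim_rep (hSU : SU.Finite) (hSB : SB.Finite) (k : ℕ)
    (q : (ultraproduct u G).Dom) :
    ∀ᶠ i in u, KBisim (G i) (ultraproduct u G) SU SB k (rep q i) q := by
  obtain ⟨S, hS, -, htest⟩ := exists_finite_kBisim_test hSU hSB k .x
  filter_upwards [eventually_forall_mem_sat_iff hS fun _ => q] with i hi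
  exact htest _ _ _ _ (localType_eq_iff.2 hi).symm

end Ultraproducts

section SequenceUltraproducts

open Filter

variable {u : Ultrafilter ℕ} {G : ℕ → Str U B} {F : Str U B} {SU : Set U} {SB : Set B}

/- A witness at `i` for the largest satisfiable level not exceeding `i` serves every level `k`
once `i ≥ k`. -/
theorem exists_forall_eventually_rep (hu : (u : Filter ℕ) ≤ atTop)
    {P : ℕ → ∀ i, (G i).Dom → Prop} (hP : ∀ i d, Antitone fun k => P k i d)
    (h : ∀ k, ∀ᶠ i in u, ∃ d, P k i d) :
    ∃ q : (ultraproduct u G).Dom, ∀ k, ∀ᶠ i in u, P k i (rep q i) := by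
  classical
  have witness i : ∃ d, ∀ k ≤ i, (∃ d', P k i d') → P k i d := by
    by_cases hi : ∃ k ≤ i, ∃ d, P k i d
    · obtain ⟨m, hm, hex⟩ := hi
      obtain ⟨d, hd⟩ := Nat.findGreatest_spec (P := fun k => ∃ d, P k i d) hm hex
      exact ⟨d, fun k hk hk' => hP i d (Nat.le_findGreatest hk hk') hd⟩
    · exact ⟨(G i).nonempty.some, fun k hk hk' => absurd ⟨k, hk, hk'⟩ hi⟩
  choose p hp using witness
  obtain ⟨q, hq⟩ := exists_eventually_rep_eq (u := u) p
  refine ⟨q, fun k => ?_⟩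
  filter_upwards [h k, hu (eventually_ge_atTop k), hq] with i hex hki hqi
  exact hqi ▸ hp i k hki hex

/-- The candidate bisimulation between `F` and an ultraproduct: every level of bounded bisimilarity
holds in almost every factor. -/
def EventuallyBisim (F : Str U B) (u : Ultrafilter ℕ) (G : ℕ → Str U B) (SU : Set U) (SB : Set B)
    (a : F.Dom) (q : (ultraproduct u G).Dom) : Prop :=
  ∀ k, ∀ᶠ i in u, KBisim F (G i) SU SB k a (rep q i)

namespace EventuallyBisim

variable {a : F.Dom} {q : (ultraproduct u G).Dom}

theorem forth (hu : (u : Filter ℕ) ≤ atTop) (hSU : SU.Finite) (hSB : SB.Finite)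
    (h : EventuallyBisim F u G SU SB a q) {a' : F.Dom} (hne : a' ≠ a) (hg : Guarded2 F SB a a') :
    ∃ q', q' ≠ q ∧ atp2 F SU SB a a' = atp2 (ultraproduct u G) SU SB q q' ∧
      EventuallyBisim F u G SU SB a' q' := by
  obtain ⟨q', hq'⟩ := exists_forall_eventually_rep hu
    (P := fun k i d => d ≠ rep q i ∧ atp2 F SU SB a a' = atp2 (G i) SU SB (rep q i) d ∧
      KBisim F (G i) SU SB k a' d)
    (fun i d k l hkl ⟨hd, hatp, hk⟩ => ⟨hd, hatp, hk.of_le hkl⟩)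
    fun k => (h (k + 1)).mono fun i hi => hi.2.1 a' hne hg
  obtain ⟨i, ⟨hne', hatp, -⟩, hatp', heq⟩ :=
    ((hq' 0).and (eventually_atp2_rep_eq hSU hSB q q')).exists
  exact ⟨q', fun hqq => hne' (heq.1 hqq.symm).symm, hatp.trans hatp'.symm,
    fun k => (hq' k).mono fun i hi => hi.2.2⟩

theorem back (hu : (u : Filter ℕ) ≤ atTop) (hSU : SU.Finite) (hSB : SB.Finite)
    (hfin : FiniteOutdeg F) (h : EventuallyBisim F u G SU SB a q) {q' : (ultraproduct u G).Dom}
    (hne : q' ≠ q) (hg : Guarded2 (ultraproduct u G) SB q q') :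
    ∃ a', a' ≠ a ∧ atp2 F SU SB a a' = atp2 (ultraproduct u G) SU SB q q' ∧
      EventuallyBisim F u G SU SB a' q' := by
  have level k : ∃ a' ∈ {a' | a' ≠ a ∧ ∃ R : B, F.b R a a' ∨ F.b R a' a}, ∀ᶠ i in u,
      atp2 F SU SB a a' = atp2 (ultraproduct u G) SU SB q q' ∧
        KBisim F (G i) SU SB k a' (rep q' i) := by
    rw [← Ultrafilter.eventually_exists_mem_iff (hfin a)]
    filter_upwards [h (k + 1), eventually_atp2_rep_eq hSU hSB q q'] with i hi ⟨hatp, heq⟩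
    obtain ⟨a', hne', hatp', hk⟩ := hi.2.2 _ (fun hqq => hne (heq.2 hqq.symm).symm)
      ((guarded2_congr hatp).1 hg)
    obtain ⟨R, -, hR⟩ := (guarded2_congr (hatp'.trans hatp.symm)).2 hg
    exact ⟨a', ⟨hne', R, hR⟩, hatp'.trans hatp.symm, hk⟩
  obtain ⟨a', ⟨hne', -⟩, ha'⟩ :=
    (Ultrafilter.eventually_exists_mem_iff (f := u) (hfin a)).1 (.of_forall level)
  obtain ⟨l, hl⟩ := ha'.exists
  obtain ⟨i, hatp, -⟩ := hl.exists
  refine ⟨a', hne', hatp, fun k => ?_⟩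
  obtain ⟨l, hl, hkl⟩ := (ha'.and (hu (eventually_ge_atTop k))).exists
  exact hl.mono fun i hi => hi.2.of_le hkl

end EventuallyBisim

theorem isBisim_eventuallyBisim (hu : (u : Filter ℕ) ≤ atTop) (hSU : SU.Finite) (hSB : SB.Finite)
    (hfin : FiniteOutdeg F) :
    IsBisim F (ultraproduct u G) SU SB (EventuallyBisim F u G SU SB) where
  atom_eq {_ q} h :=
    let ⟨_, hi, hq⟩ := ((h 0).and (eventually_kBisim_rep hSU hSB 0 q)).exists
    hi.trans hq
  forth h _ := h.forth hu hSU hSB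
  back h _ := h.back hu hSU hSB hfin

theorem exists_bisim_ultraproduct (hu : (u : Filter ℕ) ≤ atTop) (hSU : SU.Finite)
    (hSB : SB.Finite) (hfin : FiniteOutdeg F) (hG : ∀ k, GloballyKBisim F (G k) SU SB k)
    (a : F.Dom) : ∃ q, Bisim F (ultraproduct u G) SU SB a q := by
  obtain ⟨q, hq⟩ := exists_forall_eventually_rep hu
    (P := fun k i d => KBisim F (G i) SU SB k a d) (fun i d k l hkl hl => hl.of_le hkl) fun k =>
      ((eventually_ge_atTop k).filter_mono hu).mono fun i hki =>
        ((hG i).1 a).imp fun d hd => hd.of_le hki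
  exact ⟨q, _, isBisim_eventuallyBisim hu hSU hSB hfin, hq⟩

theorem exists_kBisim_ultraproduct (hu : (u : Filter ℕ) ≤ atTop) (hSU : SU.Finite)
    (hSB : SB.Finite) (hG : ∀ k, GloballyKBisim F (G k) SU SB k) (k : ℕ)
    (q : (ultraproduct u G).Dom) : ∃ a, KBisim F (ultraproduct u G) SU SB k a q := by
  obtain ⟨i, hq, hki⟩ :=
    ((eventually_kBisim_rep hSU hSB k q).and (hu (eventually_ge_atTop k))).exists
  obtain ⟨a, ha⟩ := (hG i).2 (rep q i)
  exact ⟨a, (ha.of_le hki).trans hq⟩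

end SequenceUltraproducts

theorem GF2Entails.exists_forest_model {φ₁ φ₂ : Fml U B} {SU : Set U} {SB : Set B}
    (H : GF2Entails SU SB φ₁ φ₂) (hSU : SU.Finite) (hSB : SB.Finite) (h2 : IsGF2 φ₂)
    (h2s : φ₂.IsSentence) {F : Str U B} (hF : SatS F φ₁) (hfin : FiniteOutdeg F) :
    ∃ G : Forest U B, SatS G.toStr φ₂ ∧ (∀ a, ∃ b, Bisim F G.toStr SU SB a b) ∧
      ∀ b k, ∃ a, KBisim F G.toStr SU SB k a b := by
  choose C hC hFC using H.exists_globallyKBisim hSU hSB hF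
  let M := ultraproduct (Filter.hyperfilter ℕ) C
  have hu := Nat.hyperfilter_le_atTop
  obtain ⟨G, hMG, hGM⟩ := exists_forest_bisim M
  have hglob k : GloballyKBisim M G.toStr Set.univ Set.univ k :=
    ⟨fun q => (hMG q).imp fun _ h => h.kBisim k, fun b => (hGM b).imp fun _ h => h.kBisim k⟩
  have hM : SatS M φ₂ := satS_ultraproduct hC
  refine ⟨G, (satS_iff_of_globallyKBisim hglob
    ⟨h2, h2s, Set.subset_univ _, Set.subset_univ _⟩).1 hM, fun a => ?_, fun b k => ?_⟩
  · obtain ⟨q, hq⟩ := exists_bisim_ultraproduct hu hSU hSB hfin hFC a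
    obtain ⟨b, hb⟩ := hMG q
    exact ⟨b, hq.trans (hb.of_subset (Set.subset_univ _) (Set.subset_univ _))⟩
  · obtain ⟨q, hq⟩ := hGM b
    obtain ⟨a, ha⟩ := exists_kBisim_ultraproduct hu hSU hSB hFC k q
    exact ⟨a, ha.trans ((hq.of_subset (Set.subset_univ _) (Set.subset_univ _)).kBisim k)⟩

/-- forest-model variant of the bounded-bisimulation
characterization: `φ₁ ⊨_Σ φ₂` iff for every regular forest model `𝔄` of `φ₁`
of finite outdegree there is a forest model `𝔅` of `φ₂` satisfying the two
bisimulation conditions. -/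
theorem gf2_entails_iff_forest_bisimulation_conditions
    {U B : Type} (φ₁ φ₂ : Fml U B) (SU : Set U) (SB : Set B)
    (hSU : SU.Finite) (hSB : SB.Finite)
    (h1 : IsGF2 φ₁) (h1s : φ₁.IsSentence)
    (h2 : IsGF2 φ₂) (h2s : φ₂.IsSentence) :
    GF2Entails SU SB φ₁ φ₂ ↔
    (∀ F : Forest U B, SatS F.toStr φ₁ → F.Regular → FiniteOutdeg F.toStr →
      ∃ G : Forest U B, SatS G.toStr φ₂ ∧
        (∀ a, ∃ b, Bisim F.toStr G.toStr SU SB a b) ∧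
        (∀ b, ∀ k : ℕ, ∃ a, KBisim F.toStr G.toStr SU SB k a b)) := by
  constructor
  · intro H F hF _ hfin
    exact H.exists_forest_model hSU hSB h2 h2s hF hfin
  · intro H
    refine gf2Entails_of_forall_regular_forest h1 h1s fun F hF hreg hfin => ?_
    obtain ⟨G, hG, hleft, hright⟩ := H F hF hreg hfin
    exact ⟨G.toStr, hG, fun k => ⟨fun a => (hleft a).imp fun _ h => h.kBisim k, (hright · k)⟩⟩

end GFC
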